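/- arXiv:1911.03707 — 2 statements merged into one kernel-verified Lean document; each statement's English description precedes it below -/
import Mathlib

section
/- For every even natural number n with 34 ≤ n ≤ 75000: if n ≡ 0 (mod 4) then a(n, n(n+1)/4) = M_n, and if n ≡ 2 (mod 4) then a(n, ⌊n(n+1)/4⌋) = -M_n. That is, in the 0 mod 4 case the maximum absolute coefficient is the absolute maximum of the coefficients, and in the 2 mod 4 case it is the negative of the absolute minimum. -/
open Polynomial

/-- `a n i` is the coefficient of `q^i` in `(q;q)_n = ∏_{k=1}^n (1 - q^k)` over `ℤ`. -/
noncomputable def a (n i : ℕ) : ℤ :=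
  (∏ k ∈ Finset.Icc 1 n, (1 - (X : Polynomial ℤ) ^ k)).coeff i

/-- `M n` is the maximum of `|a n i|` over `0 ≤ i ≤ n(n+1)/2`. -/
noncomputable def M (n : ℕ) : ℕ :=
  (Finset.range (n * (n + 1) / 2 + 1)).sup fun i => (a n i).natAbs

/-- `L n` is the least index `i` with `|a n i| = M n`. -/
noncomputable def L (n : ℕ) : ℕ :=
  sInf {i : ℕ | (a n i).natAbs = M n}


namespace QP
open Real MeasureTheory

/-- `ph t = log |2 sin (π t)|` -/
noncomputable def ph (t : ℝ) : ℝ := Real.log (2 * Real.sin (π * t))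

lemma ph_add_one (t : ℝ) : ph (t + 1) = ph t := by
  unfold ph
  rw [mul_add, mul_one, Real.sin_add_pi, mul_neg, Real.log_neg_eq_log]

lemma ph_periodic : Function.Periodic ph 1 := ph_add_one

lemma ph_add_int (t : ℝ) (k : ℤ) : ph (t + k) = ph t := by
  simpa using ph_periodic.int_mul k t

lemma ph_neg (t : ℝ) : ph (-t) = ph t := by
  unfold ph
  rw [mul_neg, Real.sin_neg, mul_neg, Real.log_neg_eq_log]

lemma ph_one_sub (t : ℝ) : ph (1 - t) = ph t := by
  rw [show 1 - t = -t + 1 by ring, ph_add_one, ph_neg]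

lemma ph_le (t : ℝ) : ph t ≤ Real.log 2 := by
  unfold ph
  by_cases h : Real.sin (π * t) = 0
  · simp [h, Real.log_nonneg]
  · rw [← Real.log_abs]
    apply Real.log_le_log
    · positivity
    · rw [abs_mul]
      have := Real.abs_sin_le_one (π * t)
      norm_num
      exact this

lemma ph_integrable (s t : ℝ) : IntervalIntegrable ph volume s t := by
  unfold ph
  have h : AnalyticOnNhd ℝ (fun t : ℝ => 2 * Real.sin (π * t)) (Set.univ) := by
    intro x _
    fun_prop
  have := (h.meromorphicOn.mono_set (Set.subset_univ (Set.uIcc s t))).intervalIntegrable_log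
  exact this

lemma ph_comp_integrable (k c s t : ℝ) : IntervalIntegrable (fun u => ph (k + c * u)) volume s t := by
  unfold ph
  have h : AnalyticOnNhd ℝ (fun u : ℝ => 2 * Real.sin (π * (k + c * u))) (Set.univ) := by
    intro x _
    fun_prop
  have := (h.meromorphicOn.mono_set (Set.subset_univ (Set.uIcc s t))).intervalIntegrable_log
  exact this

/-- antiderivative of `ph` -/
noncomputable def Lam (t : ℝ) : ℝ := ∫ u in (0:ℝ)..t, ph u

lemma Lam_sub (s t : ℝ) : Lam t - Lam s = ∫ u in s..t, ph u := by
  unfold Lam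
  rw [intervalIntegral.integral_interval_sub_left (ph_integrable _ _) (ph_integrable _ _)]

lemma Lam_zero : Lam 0 = 0 := by simp [Lam]

lemma Lam_half : Lam (1/2) = 0 := by
  have h := integral_log_sin_zero_pi_div_two
  unfold Lam ph
  have h1 : ∫ u in (0:ℝ)..(1/2), Real.log (2 * Real.sin (π * u)) =
      ∫ u in (0:ℝ)..(1/2), (Real.log 2 + Real.log (Real.sin (π * u))) := by
    apply intervalIntegral.integral_congr_ae
    refine Filter.Eventually.of_forall ?_
    intro u hu
    rw [Set.uIoc_of_le (by norm_num)] at hu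
    rw [Real.log_mul (by norm_num)]
    apply ne_of_gt
    apply Real.sin_pos_of_pos_of_lt_pi
    · exact mul_pos Real.pi_pos hu.1
    · nlinarith [Real.pi_pos, hu.2]
  rw [h1, intervalIntegral.integral_add (by simp)]
  · rw [intervalIntegral.integral_comp_mul_left (fun x => Real.log (Real.sin x)) Real.pi_ne_zero]
    rw [mul_zero, show π * (1/2) = π/2 by ring, h]
    simp
    field_simp
    ring
  · have h : AnalyticOnNhd ℝ (fun u : ℝ => Real.sin (π * u)) (Set.univ) := by
      intro x _
      fun_prop
    exact (h.meromorphicOn.mono_set (Set.subset_univ (Set.uIcc _ _))).intervalIntegrable_log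

lemma Lam_one_sub (t : ℝ) : Lam (1 - t) = Lam 1 - Lam t := by
  have : Lam 1 - Lam (1 - t) = Lam t := by
    rw [Lam_sub]
    unfold Lam
    have := intervalIntegral.integral_comp_sub_left (a := 0) (b := t) ph 1
    rw [sub_zero] at this
    rw [← this]
    congr 1
    ext u
    rw [ph_one_sub]
  linarith

lemma Lam_one : Lam 1 = 0 := by
  have := Lam_one_sub (1/2)
  rw [show (1:ℝ) - 1/2 = 1/2 by norm_num, Lam_half] at this
  linarith

lemma Lam_add_one (t : ℝ) : Lam (t + 1) = Lam t := by
  have h := ph_periodic.intervalIntegral_add_eq 0 t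
  have h1 : ∫ u in t..(t+1), ph u = 0 := by
    rw [← h, zero_add]; exact Lam_one
  have := Lam_sub t (t+1)
  linarith

lemma Lam_periodic : Function.Periodic Lam 1 := Lam_add_one

lemma Lam_add_int (t : ℝ) (k : ℤ) : Lam (t + k) = Lam t := by
  simpa using Lam_periodic.int_mul k t

lemma sin_pi_pos {t : ℝ} (h0 : 0 < t) (h1 : t < 1) : 0 < Real.sin (π * t) := by
  apply Real.sin_pos_of_pos_of_lt_pi
  · exact mul_pos Real.pi_pos h0
  · nlinarith [Real.pi_pos]

lemma logsin_concave : ConcaveOn ℝ (Set.Ioo 0 1) ph := by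
  have h1 : ConcaveOn ℝ (Set.Ioo (0:ℝ) 1) (fun t => 2 * Real.sin (π * t)) := by
    refine ⟨convex_Ioo _ _, ?_⟩
    intro x hx y hy a b ha hb hab
    have := (strictConcaveOn_sin_Icc.concaveOn).2
      (x := π * x) ⟨by nlinarith [Real.pi_pos, hx.1], by nlinarith [Real.pi_pos, hx.2]⟩
      (y := π * y) ⟨by nlinarith [Real.pi_pos, hy.1], by nlinarith [Real.pi_pos, hy.2]⟩ ha hb hab
    simp only [smul_eq_mul] at this ⊢
    rw [show π * (a * x + b * y) = a * (π * x) + b * (π * y) by ring]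
    linarith
  have him : Set.image (fun t => 2 * Real.sin (π * t)) (Set.Ioo (0:ℝ) 1) ⊆ Set.Ioi 0 := by
    rintro _ ⟨t, ht, rfl⟩
    have := sin_pi_pos ht.1 ht.2
    simpa using this
  refine ⟨convex_Ioo _ _, ?_⟩
  intro x hx y hy a b ha hb hab
  have e1 := h1.2 hx hy ha hb hab
  have px := him ⟨x, hx, rfl⟩
  have py := him ⟨y, hy, rfl⟩
  have e2 := strictConcaveOn_log_Ioi.concaveOn.2 px py ha hb hab
  refine e2.trans ?_
  unfold ph
  apply Real.log_le_log _ e1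
  have := (convex_Ioi (0:ℝ)) px py ha hb hab
  exact this

lemma trap_same {s h : ℝ} (hs : 0 < s) (hh : 0 < h) (h1 : s + h < 1) :
    (ph s + ph (s + h)) / 2 * h ≤ ∫ u in s..(s+h), ph u := by
  have hc : ∀ u ∈ Set.Icc s (s+h), ph s + (u - s) * ((ph (s+h) - ph s)/h) ≤ ph u := by
    intro u hu
    have hx : s ∈ Set.Ioo (0:ℝ) 1 := ⟨hs, by linarith⟩
    have hy : s + h ∈ Set.Ioo (0:ℝ) 1 := ⟨by linarith, h1⟩
    have ha : 0 ≤ 1 - (u-s)/h := by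
      have : (u-s)/h ≤ 1 := by
        rw [div_le_one hh]; linarith [hu.2]
      linarith
    have hb : 0 ≤ (u-s)/h := div_nonneg (by linarith [hu.1]) hh.le
    have := logsin_concave.2 hx hy ha hb (by ring)
    simp only [smul_eq_mul] at this
    have e : (1 - (u - s) / h) * s + (u - s) / h * (s + h) = u := by
      field_simp; ring
    rw [e] at this
    refine le_trans (le_of_eq ?_) this
    field_simp; ring
  have := intervalIntegral.integral_mono_on (a := s) (b := s+h) (by linarith)
    (f := fun u => ph s + (u - s) * ((ph (s+h) - ph s)/h)) (g := ph)
    (Continuous.intervalIntegrable (by fun_prop) _ _) (ph_integrable _ _) hc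
  refine le_trans (le_of_eq ?_) this
  rw [intervalIntegral.integral_add (by simp) (Continuous.intervalIntegrable (by fun_prop) _ _),
    intervalIntegral.integral_mul_const,
    intervalIntegral.integral_sub (by simp) (by simp)]
  simp
  field_simp
  ring

lemma sin_ratio {t c : ℝ} (ht : 0 ≤ t) (htc : t ≤ c) (hc0 : 0 < c) (hc : c ≤ 1) :
    t / c * Real.sin (π * c) ≤ Real.sin (π * t) := by
  have hx : (0:ℝ) ∈ Set.Icc 0 π := ⟨le_refl _, Real.pi_pos.le⟩
  have hy : π * c ∈ Set.Icc 0 π := ⟨by nlinarith [Real.pi_pos], by nlinarith [Real.pi_pos]⟩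
  have ha : 0 ≤ 1 - t / c := by
    have : t / c ≤ 1 := by rw [div_le_one hc0]; exact htc
    linarith
  have hb : 0 ≤ t / c := by positivity
  have h := (strictConcaveOn_sin_Icc.concaveOn).2 hx hy ha hb (by ring)
  simp only [smul_eq_mul, Real.sin_zero, mul_zero, zero_add] at h
  rwa [show t / c * (π * c) = π * t by field_simp] at h

lemma Lam_ge {c : ℝ} (hc0 : 0 < c) (hc : c < 1) : c * ph c - c ≤ Lam c := by
  have hsc := sin_pi_pos hc0 hc
  have hc' : ∀ u ∈ Set.Ioo 0 c, ph c + (Real.log u - Real.log c) ≤ ph u := by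
    intro u hu
    have h1 := sin_ratio hu.1.le hu.2.le hc0 hc.le
    unfold ph
    rw [Real.log_mul (by norm_num) hsc.ne', Real.log_mul (by norm_num)
      (sin_pi_pos hu.1 (hu.2.trans hc)).ne']
    have h2 := Real.log_le_log (by have := hu.1; positivity) h1
    rw [Real.log_mul (by have := hu.1; positivity) hsc.ne', Real.log_div hu.1.ne' hc0.ne'] at h2
    linarith
  have hlog : IntervalIntegrable Real.log volume 0 c := intervalIntegral.intervalIntegrable_log'
  have hi : IntervalIntegrable (fun u => ph c + (Real.log u - Real.log c)) volume 0 c := by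
    exact (_root_.intervalIntegrable_const).add (hlog.sub (_root_.intervalIntegrable_const))
  have := intervalIntegral.integral_mono_on_of_le_Ioo hc0.le hi (ph_integrable 0 c) hc'
  refine le_trans (le_of_eq ?_) this
  rw [intervalIntegral.integral_add (by simp) (hlog.sub (by simp)),
    intervalIntegral.integral_sub hlog (by simp), integral_log]
  simp
  ring

end QP

namespace QP
open Real MeasureTheory

lemma ph_mono_aux {b c : ℝ} (hc : 0 < c) (hcb : c ≤ b) (hbc : b + c ≤ 1) : ph c ≤ ph b := by
  unfold ph
  have hcs := sin_pi_pos hc (by linarith)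
  apply Real.log_le_log (by linarith)
  have : Real.sin (π * c) ≤ Real.sin (π * b) := by
    by_cases h : b ≤ 1/2
    · apply Real.sin_le_sin_of_le_of_le_pi_div_two
      · nlinarith [Real.pi_pos]
      · nlinarith [Real.pi_pos]
      · nlinarith [Real.pi_pos]
    · rw [← Real.sin_pi_sub (π * b)]
      push Not at h
      apply Real.sin_le_sin_of_le_of_le_pi_div_two
      · nlinarith [Real.pi_pos]
      · nlinarith [Real.pi_pos]
      · nlinarith [Real.pi_pos]
  linarith

lemma trap_cross {s h : ℝ} (hh : 0 < h) (hh1 : h < 1) (hs : ∀ k : ℤ, s ≠ k)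
    (hs' : ∀ k : ℤ, s + h ≠ k) :
    (ph s + ph (s + h)) / 2 ≤ (Lam (s + h) - Lam s) / h + ((⌊s + h⌋ : ℝ) - ⌊s⌋) := by
  obtain ⟨r, hr⟩ : ∃ r : ℝ, r = Int.fract s := ⟨_, rfl⟩
  have hsr : s = r + (⌊s⌋ : ℝ) := by
    have := Int.floor_add_fract s
    linarith
  obtain ⟨z, hz⟩ : ∃ z : ℤ, z = ⌊s⌋ := ⟨_, rfl⟩
  have hr0 : 0 < r := by
    have h1 := Int.fract_nonneg s
    have h2 : r ≠ 0 := by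
      intro h0
      apply hs ⌊s⌋
      rw [h0] at hsr
      linarith
    exact lt_of_le_of_ne (hr ▸ h1) (Ne.symm h2)
  have hr1 : r < 1 := hr ▸ Int.fract_lt_one s
  rw [← hz] at hsr ⊢
  subst hsr
  have e1 : r + (z:ℝ) + h = r + h + z := by ring
  rw [e1, ph_add_int, ph_add_int, Lam_add_int, Lam_add_int, Int.floor_add_intCast]
  push_cast
  rcases lt_or_ge (r + h) 1 with hlt | hge
  · have := trap_same hr0 hh hlt
    rw [← Lam_sub] at this
    rw [← le_div_iff₀ hh] at this
    have h3 : ⌊r + h⌋ = 0 := by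
      rw [Int.floor_eq_iff]; constructor <;> push_cast <;> linarith
    rw [h3]
    push_cast
    linarith
  · have hne : r + h ≠ 1 := by
      intro h0
      apply hs' (1 + z)
      push_cast
      linarith
    have hgt : 1 < r + h := lt_of_le_of_ne hge (Ne.symm hne)
    have h3 : ⌊r + h⌋ = 1 := by
      rw [Int.floor_eq_iff]; constructor <;> push_cast <;> linarith
    rw [h3]
    push_cast
    obtain ⟨b, hb⟩ : ∃ b, b = 1 - r := ⟨_, rfl⟩
    obtain ⟨c, hc⟩ : ∃ c, c = r + h - 1 := ⟨_, rfl⟩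
    have hb0 : 0 < b := by linarith
    have hc0 : 0 < c := by linarith
    have er : r = 1 - b := by linarith
    have eh : r + h = c + 1 := by linarith
    have eh2 : h = b + c := by linarith
    rw [eh, ph_add_one, Lam_add_one, er, ph_one_sub, Lam_one_sub, Lam_one, eh2]
    have l1 := Lam_ge hb0 (by linarith)
    have l2 := Lam_ge hc0 (by linarith)
    have l3 : 0 ≤ (b - c) * (ph b - ph c) := by
      rcases le_total b c with hbc | hbc
      · have := ph_mono_aux hb0 hbc (by linarith)
        nlinarith
      · have := ph_mono_aux hc0 hbc (by linarith)
        nlinarith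
    rw [← sub_le_iff_le_add, le_div_iff₀ (by linarith)]
    nlinarith

lemma mid_le {c h : ℝ} (hh : 0 ≤ h) (h0 : 0 < c - h) (h1 : c + h < 1) :
    Lam (c + h) - Lam (c - h) ≤ 2 * h * ph c := by
  rw [Lam_sub]
  have e : ∫ u in (c-h)..(c+h), ph (2 * c - u) = ∫ u in (c-h)..(c+h), ph u := by
    have := intervalIntegral.integral_comp_sub_left (a := c - h) (b := c + h) ph (2*c)
    rw [this]
    congr 1 <;> ring
  have hi : IntervalIntegrable (fun u => ph (2 * c - u)) volume (c-h) (c+h) := by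
    have := ph_comp_integrable (2*c) (-1) (c-h) (c+h)
    refine this.congr ?_
    intro u _
    simp only
    congr 1; ring
  have key := intervalIntegral.integral_mono_on (a := c - h) (b := c + h) (by linarith)
    (f := fun u => ph u + ph (2 * c - u)) (g := fun _ => 2 * ph c)
    ((ph_integrable _ _).add hi) (by simp) (by
      intro u hu
      have hx : u ∈ Set.Ioo (0:ℝ) 1 := ⟨by linarith [hu.1], by linarith [hu.2]⟩
      have hy : 2 * c - u ∈ Set.Ioo (0:ℝ) 1 := ⟨by linarith [hu.2], by linarith [hu.1]⟩
      have := logsin_concave.2 hx hy (by norm_num : (0:ℝ) ≤ 1/2) (by norm_num : (0:ℝ) ≤ 1/2)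
        (by norm_num)
      simp only [smul_eq_mul] at this
      rw [show 1 / 2 * u + 1 / 2 * (2 * c - u) = c by ring] at this
      linarith)
  rw [intervalIntegral.integral_add (ph_integrable _ _) hi, e] at key
  simp at key
  nlinarith

/-- lower bound for the log of the sine product near 0 -/
lemma sum_ph_ge {x : ℝ} (hx : 0 < x) (n : ℕ) (h : (n + 1/2) * x < 1) :
    (Lam ((n + 1/2) * x) - Lam (x / 2)) / x ≤ ∑ k ∈ Finset.range n, ph ((k + 1) * x) := by
  induction n with
  | zero => simp; rw [show (2:ℝ)⁻¹ * x = x/2 by ring]; simp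
  | succ n ih =>
    rw [Finset.sum_range_succ]
    push_cast at h ⊢
    have ih' := ih (by nlinarith)
    have hm := mid_le (c := (n+1) * x) (h := x/2) (by linarith) (by nlinarith [show (0:ℝ) ≤ n * x by positivity]) (by linarith)
    rw [show ((n:ℝ)+1) * x + x/2 = (n + 1 + 1/2) * x by ring,
      show ((n:ℝ)+1) * x - x/2 = (n + 1/2) * x by ring] at hm
    have : (Lam ((n + 1 + 1/2) * x) - Lam (x / 2)) / x =
      (Lam ((n + 1/2) * x) - Lam (x / 2)) / x + (Lam ((n + 1 + 1/2) * x) - Lam ((n + 1/2) * x)) / x := by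
      ring
    rw [this]
    have h2 : (Lam ((n + 1 + 1/2) * x) - Lam ((n + 1/2) * x)) / x ≤ ph ((n+1) * x) := by
      rw [div_le_iff₀ hx]; linarith
    linarith

lemma ph_nonneg {t : ℝ} (h1 : 1/6 ≤ t) (h2 : t ≤ 5/6) : 0 ≤ ph t := by
  have h6 : ph (1/6) = 0 := by
    unfold ph
    rw [show π * (1/6) = π/6 by ring, Real.sin_pi_div_six]; norm_num
  have := ph_mono_aux (b := t) (c := 1/6) (by norm_num) h1 (by linarith)
  linarith

lemma ph_nonpos {t : ℝ} (h1 : 0 < t) (h2 : t ≤ 1/6) : ph t ≤ 0 := by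
  have h6 : ph (1/6) = 0 := by
    unfold ph
    rw [show π * (1/6) = π/6 by ring, Real.sin_pi_div_six]; norm_num
  have := ph_mono_aux (b := 1/6) (c := t) h1 h2 (by linarith)
  linarith

lemma ph_zero : ph 0 = 0 := by simp [ph]

lemma ph_nonpos' {t : ℝ} (h1 : 5/6 ≤ t) (h2 : t ≤ 1) : ph t ≤ 0 := by
  rw [← ph_one_sub]
  rcases h2.eq_or_lt with h | h
  · rw [h]; simp [ph_zero]
  · exact ph_nonpos (by linarith) (by linarith)

lemma Lam_le_of_nonneg {s t : ℝ} (hst : s ≤ t) (h : ∀ u ∈ Set.Icc s t, 0 ≤ ph u) : Lam s ≤ Lam t := by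
  have := intervalIntegral.integral_nonneg (μ := volume) hst h
  rw [← Lam_sub] at this
  linarith

lemma Lam_le_of_nonpos {s t : ℝ} (hst : s ≤ t) (h : ∀ u ∈ Set.Icc s t, ph u ≤ 0) : Lam t ≤ Lam s := by
  have := intervalIntegral.integral_nonneg (μ := volume) (f := fun u => - ph u) hst (fun u hu => by simpa using h u hu)
  rw [intervalIntegral.integral_neg, ← Lam_sub] at this
  linarith

lemma Lam_nonpos {t : ℝ} (h0 : 0 ≤ t) (h1 : t ≤ 1/2) : Lam t ≤ 0 := by
  rcases le_total t (1/6) with h | h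
  · rw [← Lam_zero]
    apply Lam_le_of_nonpos h0
    intro u hu
    rcases hu.1.eq_or_lt with h' | h'
    · rw [← h', ph_zero]
    · exact ph_nonpos h' (hu.2.trans h)
  · rw [← Lam_half]
    apply Lam_le_of_nonneg h1
    intro u hu
    exact ph_nonneg (h.trans hu.1) (by linarith [hu.2])

lemma Lam_nonneg {t : ℝ} (h0 : 1/2 ≤ t) (h1 : t ≤ 1) : 0 ≤ Lam t := by
  have := Lam_nonpos (t := 1 - t) (by linarith) (by linarith)
  rw [Lam_one_sub, Lam_one] at this
  linarith

lemma Lam_le_56 {t : ℝ} (h0 : 0 ≤ t) (h1 : t ≤ 1) : Lam t ≤ Lam (5/6) := by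
  rcases le_total t (1/2) with h | h
  · exact (Lam_nonpos h0 h).trans (Lam_nonneg (by norm_num) (by norm_num))
  · rcases le_total t (5/6) with h' | h'
    · apply Lam_le_of_nonneg h'
      intro u hu
      exact ph_nonneg (by linarith [hu.1]) hu.2
    · apply Lam_le_of_nonpos h'
      intro u hu
      exact ph_nonpos' hu.1 (by linarith [hu.2])

lemma ph_34 : ph (3/4) = Real.log 2 / 2 := by
  rw [← ph_one_sub]
  unfold ph
  rw [show π * (1 - 3/4) = π/4 by ring, Real.sin_pi_div_four]
  rw [show 2 * (√2/2) = √2 by ring, Real.log_sqrt (by norm_num)]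

lemma ph_23 : ph (2/3) = Real.log 3 / 2 := by
  rw [← ph_one_sub]
  unfold ph
  rw [show π * (1 - 2/3) = π/3 by ring, Real.sin_pi_div_three]
  rw [show 2 * (√3/2) = √3 by ring, Real.log_sqrt (by norm_num)]

lemma ph_12 : ph (1/2) = Real.log 2 := by
  unfold ph
  rw [show π * (1/2) = π/2 by ring, Real.sin_pi_div_two, mul_one]

lemma ph_712 : ph (7/12) = Real.log (2 + √3) / 2 := by
  rw [← ph_one_sub]
  unfold ph
  have h0 : 0 < Real.sin (π * (1 - 7/12)) := sin_pi_pos (by norm_num) (by norm_num)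
  rw [← Real.log_sqrt (by positivity)]
  congr 1
  symm
  rw [Real.sqrt_eq_iff_mul_self_eq (by positivity) (by positivity)]
  have h2 : Real.cos (2 * (π * (1 - 7/12))) = - (√3/2) := by
    rw [show 2 * (π * (1 - 7/12)) = π - π/6 by ring, Real.cos_pi_sub, Real.cos_pi_div_six]
  rw [Real.cos_two_mul, Real.cos_sq'] at h2
  linarith

lemma log_lb {x : ℝ} (y : ℝ) (h : Real.exp y ≤ x) : y ≤ Real.log x :=
  (Real.le_log_iff_exp_le (lt_of_lt_of_le (Real.exp_pos y) h)).2 h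

lemma log3_lb : (1.098:ℝ) ≤ Real.log 3 := by
  have h2 := Real.log_three_gt_d9
  linarith

lemma sqrt3_bounds : (1.732:ℝ) ≤ √3 ∧ √3 ≤ 1.7321 := by
  constructor
  · apply Real.le_sqrt_of_sq_le; norm_num
  · rw [Real.sqrt_le_left (by norm_num)]; norm_num

lemma log23_bounds : (1.315:ℝ) ≤ Real.log (2 + √3) ∧ Real.log (2 + √3) ≤ 1.318 := by
  have h2 := Real.log_two_gt_d9
  have h2' := Real.log_two_lt_d9
  obtain ⟨h3, h4⟩ := sqrt3_bounds
  constructor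
  · have h : (2:ℝ)^74 ≤ (2 + √3)^39 := by
      calc (2:ℝ)^74 ≤ (3.732)^39 := by norm_num
        _ ≤ _ := by gcongr; linarith
    have := Real.log_le_log (by norm_num) h
    rw [Real.log_pow, Real.log_pow] at this
    push_cast at this
    linarith
  · have h : (2 + √3)^10 ≤ 2^19 := by
      calc (2 + √3)^10 ≤ (3.7321)^10 := by gcongr; linarith
        _ ≤ 2^19 := by norm_num
    have := Real.log_le_log (by positivity) h
    rw [Real.log_pow, Real.log_pow] at this
    push_cast at this
    linarith

lemma Lam_le_max (t : ℝ) : Lam t ≤ 0.1676 := by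
  have h1 : Lam t = Lam (Int.fract t) := by
    conv_lhs => rw [← Int.fract_add_floor t]
    rw [Lam_add_int]
  rw [h1]
  refine (Lam_le_56 (Int.fract_nonneg t) (Int.fract_lt_one t).le).trans ?_
  have a1 := mid_le (c := 7/12) (h := 1/12) (by norm_num) (by norm_num) (by norm_num)
  have a2 := mid_le (c := 3/4) (h := 1/12) (by norm_num) (by norm_num) (by norm_num)
  norm_num at a1 a2
  have h0 := Lam_half
  rw [ph_712] at a1
  rw [ph_34] at a2
  have h2' := Real.log_two_lt_d9
  have := log23_bounds.2
  linarith

lemma Lam_lb {w : ℝ} (h1 : 3/4 ≤ w) (h2 : w ≤ 5/6) : 0.189 * w ≤ Lam w := by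
  have a1 := trap_same (s := 1/2) (h := 1/12) (by norm_num) (by norm_num) (by norm_num)
  have a2 := trap_same (s := 7/12) (h := 1/12) (by norm_num) (by norm_num) (by norm_num)
  have a3 := trap_same (s := 2/3) (h := 1/12) (by norm_num) (by norm_num) (by norm_num)
  rw [← Lam_sub] at a1 a2 a3
  norm_num at a1 a2 a3
  have h0 := Lam_half
  rw [ph_712, ph_12] at a1
  rw [ph_712, ph_23] at a2
  rw [ph_23, ph_34] at a3
  have l2 := Real.log_two_gt_d9
  have l3 := log3_lb
  have l4 := log23_bounds.1
  have hw : (w - 3/4) * (ph (3/4) / 2) ≤ Lam w - Lam (3/4) := by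
    rcases h1.eq_or_lt with h | h
    · rw [← h]; simp
    · have a4 := trap_same (s := 3/4) (h := w - 3/4) (by norm_num) (by linarith) (by linarith)
      rw [← Lam_sub, show 3/4 + (w - 3/4) = w by ring] at a4
      have := ph_nonneg (t := w) (by linarith) h2
      nlinarith
  rw [ph_34] at hw
  nlinarith

lemma Lam_lin {t : ℝ} (h1 : 1/2 ≤ t) : Lam t ≤ (t - 1/2) * Real.log 2 := by
  have := intervalIntegral.integral_mono_on (a := 1/2) (b := t) h1
    (f := ph) (g := fun _ => Real.log 2) (ph_integrable _ _) (by simp) (fun u _ => ph_le u)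
  rw [← Lam_sub, Lam_half] at this
  simpa using this

lemma Lam_div {A : ℝ} (h : 0 < A) : Lam A ≤ 0.226 * A := by
  rcases le_total A (1/2) with h1 | h1
  · have := Lam_nonpos h.le h1
    linarith
  · have h2 := Lam_lin h1
    have h3 := Lam_le_max A
    have h2' := Real.log_two_lt_d9
    rcases le_total A 0.742 with h4 | h4
    · nlinarith
    · linarith

end QP

namespace QP
open Real MeasureTheory

lemma sum_shift_sub (g : ℕ → ℝ) (m q : ℕ) :
    ∑ k ∈ Finset.range m, (g (q + k) - g k) =
      ∑ j ∈ Finset.range q, g (m + j) - ∑ j ∈ Finset.range q, g j := by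
  have h1 := Finset.sum_range_add g m q
  have h2 := Finset.sum_range_add g q m
  rw [add_comm q m] at h2
  rw [Finset.sum_sub_distrib]
  linarith

lemma sum_shift_add (g : ℕ → ℝ) (m q : ℕ) :
    ∑ k ∈ Finset.range m, (g k + g (q + k)) =
      2 * ∑ k ∈ Finset.range (m + q), g k -
      ∑ j ∈ Finset.range q, g (m + j) - ∑ j ∈ Finset.range q, g j := by
  have h1 := Finset.sum_range_add g m q
  have h2 := Finset.sum_range_add g q m
  rw [add_comm q m] at h2
  rw [Finset.sum_add_distrib]
  linarith

lemma sum_residues {F : ℝ → ℝ} (hF : Function.Periodic F 1) (p : ℤ) (q : ℕ) (hq : 0 < q)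
    (hpq : IsCoprime p (q:ℤ)) (c : ℤ) (t : ℝ) :
    ∑ j ∈ Finset.range q, F (((c + j) * p : ℝ) / q + t) = ∑ r ∈ Finset.range q, F ((r:ℝ) / q + t) := by
  have : NeZero q := ⟨hq.ne'⟩
  have hq' : (q:ℝ) ≠ 0 := by positivity
  have hval : ∀ m : ℤ, F ((m:ℝ)/q + t) = F ((((m : ZMod q)).val : ℝ)/q + t) := by
    intro m
    have h1 : (((m : ZMod q)).val : ℤ) = m % q := ZMod.val_intCast m
    have h2 : (m:ℝ) = (((m : ZMod q)).val : ℝ) + q * ((m / q : ℤ) : ℝ) := by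
      have h3 : (m:ℤ) = (((m : ZMod q)).val : ℤ) + q * (m / q) := by
        rw [h1]; exact (Int.emod_add_mul_ediv m q).symm
      exact_mod_cast congrArg (Int.cast : ℤ → ℝ) h3
    have h4 := hF.int_mul (m / q) ((((m : ZMod q)).val : ℝ)/q + t)
    rw [← h4]
    congr 1
    rw [h2]
    simp
    field_simp
    ring
  have hsum : ∀ g : ZMod q → ℝ, ∑ j ∈ Finset.range q, g (j : ZMod q) = ∑ z, g z := by
    intro g
    refine Finset.sum_nbij' (fun j => (j : ZMod q)) ZMod.val ?_ ?_ ?_ ?_ ?_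
    · simp
    · intro z _; simpa using ZMod.val_lt z
    · intro j hj; exact ZMod.val_cast_of_lt (by simpa using hj)
    · intro z _; simp
    · simp
  have hL : ∀ j : ℕ, F (((c + j) * p : ℝ) / q + t) =
      (fun z : ZMod q => F (((((c:ZMod q) + z) * (p : ZMod q)).val : ℝ)/q + t)) (j : ZMod q) := by
    intro j
    have := hval ((c + j) * p)
    push_cast at this
    simpa using this
  have hR : ∀ j : ℕ, F ((j : ℝ) / q + t) =
      (fun z : ZMod q => F ((z.val : ℝ)/q + t)) (j : ZMod q) := by
    intro j
    have := hval j
    push_cast at this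
    simpa using this
  rw [Finset.sum_congr rfl (fun j _ => hL j), Finset.sum_congr rfl (fun j _ => hR j)]
  rw [hsum (fun z : ZMod q => F (((((c:ZMod q) + z) * (p : ZMod q)).val : ℝ)/q + t)),
    hsum (fun z : ZMod q => F ((z.val : ℝ)/q + t))]
  have hu : IsUnit (p : ZMod q) := by
    obtain ⟨u, v, huv⟩ := hpq
    refine IsUnit.of_mul_eq_one (u : ZMod q) ?_
    have := congrArg (Int.cast : ℤ → ZMod q) huv
    push_cast at this
    simp at this
    rw [mul_comm]; exact this
  obtain ⟨u, hu⟩ := hu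
  refine Fintype.sum_equiv ((Equiv.addLeft (c : ZMod q)).trans (Units.mulRight u)) _ _ ?_
  intro z
  simp [hu]

lemma norm_one_sub_exp (θ : ℝ) :
    ‖(1:ℂ) - Complex.exp (((2 * θ : ℝ) : ℂ) * Complex.I)‖ = |2 * Real.sin θ| := by
  rw [← Real.sqrt_sq_eq_abs, Complex.norm_eq_sqrt_sq_add_sq]
  congr 1
  simp only [Complex.sub_re, Complex.sub_im, Complex.one_re, Complex.one_im,
    Complex.exp_ofReal_mul_I_re, Complex.exp_ofReal_mul_I_im]
  rw [Real.cos_two_mul, Real.sin_two_mul]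
  have := Real.sin_sq_add_cos_sq θ
  have h2 : Real.cos θ ^ 2 = 1 - Real.sin θ ^2 := by linarith
  have : (2 * Real.sin θ * Real.cos θ)^2 = 4 * Real.sin θ^2 * (1 - Real.sin θ^2) := by
    rw [← h2]; ring
  rw [h2]
  nlinarith

lemma prod_sin_dist (q : ℕ) (hq : 0 < q) (u : ℝ) :
    ∏ r ∈ Finset.range q, |2 * Real.sin (π * ((r:ℝ)/q + u))| = |2 * Real.sin (π * (q * u))| := by
  have hz := Complex.isPrimitiveRoot_exp q hq.ne'
  have hq' : (q:ℂ) ≠ 0 := by exact_mod_cast hq.ne'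
  have h := X_pow_sub_C_eq_prod hz hq
    (α := Complex.exp (((2 * (π * u) : ℝ) : ℂ) * Complex.I)) rfl
  have h2 := congrArg (Polynomial.eval 1) h
  simp only [Polynomial.eval_sub, Polynomial.eval_pow, Polynomial.eval_X, one_pow,
    Polynomial.eval_C, Polynomial.eval_prod] at h2
  have h3 := congrArg norm h2
  rw [norm_prod, ← Complex.exp_nat_mul] at h3
  have e1 : (q:ℂ) * (((2 * (π * u) : ℝ) : ℂ) * Complex.I) =
     ((2 * (π * (q * u)) : ℝ) : ℂ) * Complex.I := by push_cast; ring
  rw [e1, norm_one_sub_exp] at h3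
  rw [h3]
  apply Finset.prod_congr rfl
  intro r _
  rw [← norm_one_sub_exp, ← Complex.exp_nat_mul, ← Complex.exp_add]
  congr 3
  push_cast
  field_simp

lemma sin_pi_eq_zero {t : ℝ} : Real.sin (π * t) = 0 ↔ ∃ k : ℤ, t = k := by
  rw [Real.sin_eq_zero_iff]
  constructor
  · rintro ⟨k, hk⟩
    refine ⟨k, ?_⟩
    have := Real.pi_pos
    apply mul_left_cancel₀ this.ne'
    linarith
  · rintro ⟨k, hk⟩
    exact ⟨k, by rw [hk]; ring⟩

lemma sum_ph_dist (q : ℕ) (hq : 0 < q) (u : ℝ) (hu : ∀ k : ℤ, q * u ≠ k) :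
    ∑ r ∈ Finset.range q, ph ((r:ℝ)/q + u) = ph (q * u) := by
  have h := prod_sin_dist q hq u
  have h2 := congrArg Real.log h
  have hne : |2 * Real.sin (π * (q * u))| ≠ 0 := by
    simp only [ne_eq, abs_eq_zero, mul_eq_zero, not_or]
    refine ⟨by norm_num, ?_⟩
    rw [sin_pi_eq_zero]
    rintro ⟨k, hk⟩
    exact hu k hk
  rw [Real.log_prod, Real.log_abs] at h2
  · simp only [Real.log_abs] at h2
    exact h2
  · rw [← h, Finset.prod_ne_zero_iff] at hne
    exact hne

lemma sum_Lam_dist (q : ℕ) (hq : 0 < q) (S T : ℝ) :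
    ∑ r ∈ Finset.range q, (Lam ((r:ℝ)/q + T) - Lam ((r:ℝ)/q + S)) =
      (Lam (q * T) - Lam (q * S)) / q := by
  have hq' : (q:ℝ) ≠ 0 := by positivity
  have h1 : ∀ r ∈ Finset.range q, Lam ((r:ℝ)/q + T) - Lam ((r:ℝ)/q + S) =
      ∫ u in S..T, ph ((r:ℝ)/q + u) := by
    intro r _
    rw [Lam_sub, intervalIntegral.integral_comp_add_left]
  rw [Finset.sum_congr rfl h1, ← intervalIntegral.integral_finsetSum]
  · rw [Lam_sub]
    have h2 := intervalIntegral.integral_comp_mul_left (a := S) (b := T) ph hq'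
    have : ∫ u in S..T, ∑ r ∈ Finset.range q, ph ((r:ℝ)/q + u) = ∫ u in S..T, ph (q * u) := by
      apply intervalIntegral.integral_congr_ae
      have hc : (Set.range (fun k : ℤ => (k:ℝ) / q)).Countable := Set.countable_range _
      have := hc.ae_notMem volume
      filter_upwards [this] with u hu _
      apply sum_ph_dist q hq
      intro k hk
      apply hu
      refine ⟨k, ?_⟩
      simp only
      rw [← hk]; field_simp
    rw [this, h2]
    simp [div_eq_inv_mul]
  · intro r _
    have := ph_comp_integrable ((r:ℝ)/q) 1 S T
    simpa using this

lemma Lam_lip {s t : ℝ} (h : s ≤ t) : Lam t ≤ Lam s + (t - s) * Real.log 2 := by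
  have := intervalIntegral.integral_mono_on (a := s) (b := t) h
    (f := ph) (g := fun _ => Real.log 2) (ph_integrable _ _) (by simp) (fun u _ => ph_le u)
  rw [← Lam_sub] at this
  simp at this
  linarith

/-- the main upper bound -/
lemma main_upper (m q : ℕ) (hq : 0 < q) (p : ℤ) (hpq : IsCoprime p (q:ℤ)) (x ε : ℝ)
    (hx : x = p / q + ε) (hε : 0 < ε) (hh : q * ε < 1)
    (hns : ∀ k ∈ Finset.range (m + q), ∀ z : ℤ, ((k:ℝ) + 1) * x ≠ z) :
    ∑ k ∈ Finset.range (m + q), ph (((k:ℝ) + 1) * x) ≤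
      (Lam (q * ((m + 1) * ε)) - Lam (q * (q * ε))) / (q * (q * ε)) + (2 * q - 1) * Real.log 2
       + m * (q * ε) + q := by
  have hqR : (0:ℝ) < q := by positivity
  have hl2 : 0 < Real.log 2 := Real.log_pos (by norm_num)
  set h := q * ε with hhdef
  have hh0 : 0 < h := by positivity
  have hqx : q * x = p + h := by rw [hx, hhdef]; field_simp
  have step : ∀ k ∈ Finset.range m, (ph (((k:ℝ)+1) * x) + ph ((((q + k : ℕ):ℝ)+1) * x)) / 2 ≤
      (Lam ((((q + k : ℕ):ℝ)+1) * x) - Lam (((k:ℝ)+1) * x)) / h +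
      (((⌊(((q + k : ℕ):ℝ)+1) * x⌋ : ℝ) - ⌊((k:ℝ)+1) * x⌋) - p) := by
    intro k hk
    have hk' : k < m := by simpa using hk
    have e : (((q + k : ℕ):ℝ)+1) * x = (((k:ℝ)+1) * x + h) + p := by
      push_cast; linear_combination hqx
    have := trap_cross (s := ((k:ℝ)+1) * x) hh0 hh (hns k (by simp; omega)) (by
      intro z hz
      apply hns (q + k) (by simp; omega) (z + p)
      rw [e, hz]; push_cast; ring)
    rw [e, ph_add_int, Lam_add_int, Int.floor_add_intCast]
    push_cast
    linarith
  have hsum := Finset.sum_le_sum step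
  rw [← Finset.sum_div, sum_shift_add (fun k => ph (((k:ℝ)+1) * x)), Finset.sum_add_distrib,
    ← Finset.sum_div, sum_shift_sub (fun k => Lam (((k:ℝ)+1) * x)), Finset.sum_sub_distrib,
    sum_shift_sub (fun k => (⌊((k:ℝ)+1) * x⌋ : ℝ))] at hsum
  have b1 : ∑ j ∈ Finset.range q, ph ((((m + j : ℕ) : ℝ) + 1) * x) ≤ q * Real.log 2 := by
    refine (Finset.sum_le_card_nsmul _ _ _ (fun j _ => ph_le _)).trans ?_
    simp
  have b2 : ∑ j ∈ Finset.range q, ph (((j : ℝ) + 1) * x) ≤ q * Real.log 2 := by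
    refine (Finset.sum_le_card_nsmul _ _ _ (fun j _ => ph_le _)).trans ?_
    simp
  have b3 : ∑ j ∈ Finset.range q, (⌊(((m + j : ℕ) : ℝ) + 1) * x⌋ : ℝ) -
      ∑ j ∈ Finset.range q, (⌊((j : ℝ) + 1) * x⌋ : ℝ) ≤ q * (m * x + 1) := by
    rw [← Finset.sum_sub_distrib]
    refine (Finset.sum_le_card_nsmul _ _ (m * x + 1) (fun j _ => ?_)).trans ?_
    · have h1 := Int.floor_le ((((m + j : ℕ) : ℝ) + 1) * x)
      have h2 := (Int.lt_floor_add_one (((j : ℝ) + 1) * x)).le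
      push_cast at h1 ⊢
      linarith
    · simp only [Finset.card_range, nsmul_eq_mul]; exact le_rfl
  have b4 : ∑ j ∈ Finset.range q, Lam ((((m + j : ℕ) : ℝ) + 1) * x) ≤
      ∑ r ∈ Finset.range q, Lam ((r:ℝ)/q + (m+1) * ε) + (∑ j ∈ Finset.range q, (j:ℝ)) * (ε * Real.log 2) := by
    rw [← sum_residues Lam_periodic p q hq hpq (m+1), Finset.sum_mul, ← Finset.sum_add_distrib]
    apply Finset.sum_le_sum
    intro j _
    have := Lam_lip (s := ((((m + 1 : ℤ):ℝ) + j) * p : ℝ) / q + (m+1) * ε) (t := (((m + j : ℕ) : ℝ) + 1) * x)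
      (by rw [hx]; push_cast
          rw [mul_add, mul_div_assoc]
          have : 0 ≤ (j:ℝ) * ε := by positivity
          nlinarith)
    refine this.trans (le_of_eq ?_)
    congr 1
    rw [hx]; push_cast; ring
  have b5 : ∑ r ∈ Finset.range q, Lam ((r:ℝ)/q + q * ε) ≤ ∑ j ∈ Finset.range q, Lam (((j : ℝ) + 1) * x)
       + (∑ j ∈ Finset.range q, ((q:ℝ) - 1 - j)) * (ε * Real.log 2) := by
    rw [← sum_residues Lam_periodic p q hq hpq 1, Finset.sum_mul, ← Finset.sum_add_distrib]
    apply Finset.sum_le_sum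
    intro j hj
    have hj' : j + 1 ≤ q := by simpa using hj
    have hj'' : (j:ℝ) + 1 ≤ q := by exact_mod_cast hj'
    have := Lam_lip (t := ((((1 : ℤ):ℝ) + j) * p : ℝ) / q + q * ε) (s := ((j : ℝ) + 1) * x)
      (by rw [hx]; push_cast
          rw [mul_add, mul_div_assoc, add_comm (j:ℝ) 1]
          nlinarith)
    refine this.trans (le_of_eq ?_)
    congr 1
    rw [hx]; push_cast; ring
  have b6 : (∑ j ∈ Finset.range q, (j:ℝ)) + (∑ j ∈ Finset.range q, ((q:ℝ) - 1 - j)) = q * (q - 1) := by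
    rw [← Finset.sum_add_distrib]; simp; ring
  have b7 := sum_Lam_dist q hq (q * ε) ((m+1) * ε)
  rw [Finset.sum_sub_distrib] at b7
  simp only [Finset.sum_const, Finset.card_range, nsmul_eq_mul] at hsum
  -- combine
  have c1 : ∑ j ∈ Finset.range q, Lam ((((m + j : ℕ) : ℝ) + 1) * x) -
     ∑ j ∈ Finset.range q, Lam (((j : ℝ) + 1) * x) ≤
     (Lam (q * ((m+1) * ε)) - Lam (q * (q * ε))) / q + q * (q - 1) * (ε * Real.log 2) := by
    rw [← b6, ← b7]; linarith
  have c2 := (div_le_div_iff_of_pos_right hh0).2 c1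
  have c3 : ((Lam (q * ((m+1) * ε)) - Lam (q * (q * ε))) / q + q * (q - 1) * (ε * Real.log 2)) / h =
     (Lam (q * ((m+1) * ε)) - Lam (q * (q * ε))) / (q * h) + (q - 1) * Real.log 2 := by
    rw [hhdef]; field_simp
  rw [c3] at c2
  have c4 : (q:ℝ) * (m * x + 1) = m * p + m * h + q := by linear_combination (m:ℝ) * hqx
  rw [c4] at b3
  rw [← hhdef] at c2
  linarith

end QP

namespace QP
open Real MeasureTheory

lemma neg_Lam_div_le {z : ℝ} (hz : 0 < z) (hz1 : z < 1) {n : ℝ} (hn : 1 ≤ n) (h : 1 / n ≤ 4 * z) :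
    - Lam z / z ≤ 1 + Real.log n := by
  have hl : 0 ≤ Real.log n := Real.log_nonneg hn
  rcases le_total z (1/2) with h2 | h2
  · have h1 := Lam_ge hz hz1
    have h3 : - Real.log n ≤ ph z := by
      rw [← Real.log_inv]
      unfold ph
      apply Real.log_le_log (by positivity)
      have := Real.mul_le_sin (x := π * z) (by positivity) (by nlinarith [Real.pi_pos])
      have e : 2 / π * (π * z) = 2 * z := by field_simp
      rw [e] at this
      rw [inv_eq_one_div]
      linarith
    rw [div_le_iff₀ hz]
    nlinarith
  · have := Lam_nonneg h2 hz1.le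
    have h4 : - Lam z / z ≤ 0 := by
      apply div_nonpos_of_nonpos_of_nonneg <;> linarith
    linarith

lemma small_A {z M : ℝ} (hz : 0 < z) (hM : 1 < M) (hA : M * z ≤ 1/2) :
    (Lam (M * z) - Lam z) / z ≤ - Lam (1/(2*M)) / (1/(2*M)) := by
  have key : ∀ w : ℝ, 0 < w → (Lam (M * w) - Lam w) / w = ∫ v in (1:ℝ)..M, ph (w * v) := by
    intro w hw
    have := intervalIntegral.integral_comp_mul_left (a := 1) (b := M) ph hw.ne'
    rw [this, mul_one, mul_comm w M, Lam_sub]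
    simp [div_eq_inv_mul]
  have h0 : 0 < 1/(2*M) := by positivity
  have e : - Lam (1/(2*M)) / (1/(2*M)) = ∫ v in (1:ℝ)..M, ph ((1/(2*M)) * v) := by
    rw [← key _ h0]
    rw [show M * (1/(2*M)) = 1/2 by field_simp, Lam_half, zero_sub]
  have hi : ∀ w, IntervalIntegrable (fun v => ph (w * v)) volume 1 M := by
    intro w
    have := ph_comp_integrable 0 w 1 M
    simpa using this
  rw [e, key z hz]
  apply intervalIntegral.integral_mono_on hM.le (hi _) (hi _)
  intro v hv
  have hv0 : 0 < v := by linarith [hv.1]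
  have hle : z ≤ 1/(2*M) := by
    rw [le_div_iff₀ (by positivity)]; linarith
  have h3 : 1/(2*M) * v ≤ 1/2 := by
    rw [div_mul_eq_mul_div, div_le_iff₀ (by positivity)]
    linarith [hv.2]
  have h4 : z * v ≤ 1/(2*M) * v := by gcongr
  apply ph_mono_aux (by positivity) h4
  linarith

set_option maxHeartbeats 1000000 in
lemma core_bound (n q : ℕ) (hn : 800 ≤ n) (hq : 0 < q) (hq9 : q ≤ 9) (p : ℤ)
    (hpq : IsCoprime p (q:ℤ)) (x ε : ℝ) (hx : x = p / q + ε) (hε : 0 < ε) (hh : q * ε ≤ 1/10)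
    (h1 : q = 1 → 1 / (n:ℝ) ≤ ε)
    (hns : ∀ k ∈ Finset.range n, ∀ z : ℤ, ((k:ℝ) + 1) * x ≠ z) :
    ∑ k ∈ Finset.range n, ph (((k:ℝ) + 1) * x) ≤ 0.117 * n + 24 + Real.log n := by
  obtain ⟨m, rfl⟩ : ∃ m, n = m + q := ⟨n - q, by omega⟩
  have hmain := main_upper m q hq p hpq x ε hx hε (by linarith) hns
  refine hmain.trans ?_
  have hnR : (800:ℝ) ≤ ((m + q : ℕ) : ℝ) := by exact_mod_cast hn
  have hmq : ((m + q : ℕ) : ℝ) = m + q := by push_cast; ring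
  have hlog : 0 ≤ Real.log ((m + q : ℕ) : ℝ) := Real.log_nonneg (by linarith)
  obtain ⟨N, hN⟩ : ∃ N : ℝ, N = ((m + q : ℕ) : ℝ) := ⟨_, rfl⟩
  rw [← hN] at hnR hmq hlog h1 ⊢
  have hl2 := Real.log_two_lt_d9
  have hl2' := Real.log_two_gt_d9
  have hq1 : (1:ℝ) ≤ q := by exact_mod_cast hq
  have hq9' : (q:ℝ) ≤ 9 := by exact_mod_cast hq9
  obtain ⟨z, hz⟩ : ∃ z, z = (q:ℝ) * (q * ε) := ⟨_, rfl⟩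
  obtain ⟨A, hA⟩ : ∃ A, A = (q:ℝ) * ((m + 1) * ε) := ⟨_, rfl⟩
  have hz0 : 0 < z := by rw [hz]; positivity
  have hA0 : 0 < A := by rw [hA]; positivity
  have hz9 : z ≤ 0.9 := by rw [hz]; nlinarith
  obtain ⟨M, hM⟩ : ∃ M, M = ((m:ℝ) + 1) / q := ⟨_, rfl⟩
  have hAM : A = M * z := by rw [hA, hM, hz]; field_simp
  have hm : (791:ℝ) ≤ m := by linarith
  have hM1 : 1 < M := by rw [hM, lt_div_iff₀ (by linarith)]; linarith
  have hMN : M ≤ N := by rw [hM, div_le_iff₀ (by linarith)]; nlinarith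
  have hMA : M / A = 1 / z := by rw [hAM]; field_simp
  rw [← hz, ← hA]
  have hfl : m * (q * ε) ≤ A := by rw [hA]; nlinarith [mul_pos (by linarith : (0:ℝ) < q) hε]
  have hfl2 : m * (q * ε) ≤ N / 10 := by
    have : (m:ℝ) * (q * ε) ≤ m * (1/10) := by gcongr
    linarith
  have hLq : (2 * (q:ℝ) - 1) * Real.log 2 ≤ (2 * q - 1) * 0.6931471808 := by
    apply mul_le_mul_of_nonneg_left hl2.le; linarith
  rcases lt_or_ge A (1/2) with hAh | hAh
  · -- small A
    have h2 := small_A hz0 hM1 (by linarith)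
    rw [← hAM] at h2
    have h3 : 0 < 1/(2*M) := by positivity
    have h4 := neg_Lam_div_le h3 (by rw [div_lt_one (by positivity)]; linarith)
      (n := N) (by linarith) (by
        rw [div_le_iff₀ (by linarith)]
        have e1 : 4 * (1/(2*M)) * N = 2 * (N / M) := by field_simp; norm_num
        have e2 : 1 ≤ N / M := by rw [le_div_iff₀ (by linarith)]; linarith
        linarith)
    linarith
  · have h4 : - Lam z / z ≤ 1 + Real.log N := by
      apply neg_Lam_div_le hz0 (by linarith) (by linarith)
      rw [div_le_iff₀ (by linarith)]
      have : M * z ≤ N * z := mul_le_mul_of_nonneg_right hMN hz0.le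
      linarith
    have e : (Lam A - Lam z) / z = M * (Lam A / A) + - Lam z / z := by
      rw [mul_div_assoc', mul_comm M, mul_div_assoc, hMA]; ring
    rw [e]
    have hLA := Lam_le_max A
    have hdiv : ∀ B : ℝ, 0 < B → B ≤ A → Lam A / A ≤ 0.1676 / B := by
      intro B hB hBA
      calc Lam A / A ≤ 0.1676 / A := by gcongr
        _ ≤ 0.1676 / B := by gcongr
    rcases Nat.lt_or_ge 1 q with hq2 | hq2
    · have hq2' : (2:ℝ) ≤ q := by exact_mod_cast hq2
      have hMN2 : M ≤ N / 2 := by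
        rw [hM, div_le_iff₀ (by linarith)]; nlinarith
      rcases le_total A 5 with hA5 | hA5
      · have h5 : Lam A / A ≤ 0.226 := by
          rw [div_le_iff₀ hA0]; exact Lam_div hA0
        have h6 : M * (Lam A / A) ≤ M * 0.226 := by gcongr
        linarith
      · have h5 := hdiv 5 (by norm_num) hA5
        have h6 : M * (Lam A / A) ≤ M * (0.1676 / 5) := by gcongr
        linarith
    · have hq1' : q = 1 := by omega
      have hε1 := h1 hq1'
      have hqr : (q:ℝ) = 1 := by rw [hq1']; norm_num
      rw [hqr] at hLq hmq hfl hfl2 ⊢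
      have hA1 : 1 ≤ A := by
        rw [hA, hqr, one_mul]
        rw [div_le_iff₀ (by linarith)] at hε1
        rw [hmq] at hε1
        linarith
      rcases le_total A (3/2) with hA2 | hA2
      · have h5 : Lam A / A ≤ 0 := by
          apply div_nonpos_of_nonpos_of_nonneg _ hA0.le
          have := Lam_add_one (A - 1)
          rw [sub_add_cancel] at this
          rw [this]
          exact Lam_nonpos (by linarith) (by linarith)
        have h6 : M * (Lam A / A) ≤ M * 0 := by gcongr
        linarith
      · rcases le_total A 10 with hA5 | hA5
        · have h5 := hdiv (3/2) (by norm_num) hA2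
          have h6 : M * (Lam A / A) ≤ M * (0.1676 / (3/2)) := by gcongr
          linarith
        · have h5 := hdiv 10 (by norm_num) hA5
          have h6 : M * (Lam A / A) ≤ M * (0.1676 / 10) := by gcongr
          linarith

lemma sum_ph_bound (n : ℕ) (hn : 800 ≤ n) (x : ℝ) (hx1 : 1 / (n:ℝ) ≤ x) (hx2 : x ≤ 1/2)
    (hns : ∀ k ∈ Finset.range n, ∀ z : ℤ, ((k:ℝ) + 1) * x ≠ z) :
    ∑ k ∈ Finset.range n, ph (((k:ℝ) + 1) * x) ≤ 0.117 * n + 24 + Real.log n := by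
  obtain ⟨r, hr1, hr2⟩ := Real.exists_rat_abs_sub_le_and_den_le x (n := 9) (by norm_num)
  have hq0 : 0 < r.den := r.den_pos
  have hqR : (0:ℝ) < r.den := by exact_mod_cast hq0
  have hnR : (800:ℝ) ≤ n := by exact_mod_cast hn
  have hx0 : 0 < x := lt_of_lt_of_le (by positivity) hx1
  have hrd : (r:ℝ) = r.num / r.den := by exact_mod_cast (Rat.num_div_den r).symm
  have hcop : IsCoprime r.num (r.den:ℤ) := by
    rw [Int.isCoprime_iff_gcd_eq_one]
    exact r.reduced
  have habs : (r.den:ℝ) * |x - r| ≤ 1/10 := by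
    have : (r.den:ℝ) * (1 / ((9 + 1) * r.den)) = 1/10 := by field_simp; norm_num
    rw [← this]
    push_cast at hr1
    gcongr
  have hne : x - r ≠ 0 := by
    intro h0
    apply hns (r.den - 1) (by simp; omega) r.num
    have : (((r.den - 1 : ℕ) : ℝ) + 1) = r.den := by
      rw [Nat.cast_sub (by omega)]; simp
    rw [this, sub_eq_zero.1 h0, hrd]
    field_simp
  have h1 : r.den = 1 → 1 / (n:ℝ) ≤ |x - r| := by
    intro hd
    have hd' : (r.den:ℝ) = 1 := by rw [hd]; norm_num
    rw [hd', one_mul] at habs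
    rw [hd', div_one] at hrd
    have h2 := abs_le.1 habs
    rw [hrd] at h2 ⊢
    have h3 : (r.num : ℝ) < 1 := by linarith [h2.1]
    have h4 : (-1:ℝ) < r.num := by linarith [h2.2]
    have h3' : r.num < 1 := by exact_mod_cast h3
    have h4' : -1 < r.num := by exact_mod_cast h4
    have : r.num = 0 := by omega
    rw [this]
    simp only [Int.cast_zero, sub_zero]
    rw [abs_of_pos hx0]
    exact hx1
  rcases lt_or_gt_of_ne hne with hneg | hpos
  · rw [abs_of_neg hneg] at habs h1
    have := core_bound n r.den hn hq0 hr2 (-r.num) hcop.neg_left (-x) (-(x - r))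
      (by rw [hrd]; push_cast; ring) (by linarith) habs h1
      (by
        intro k hk z hz
        apply hns k hk (-z)
        push_cast
        linarith)
    refine le_trans (le_of_eq ?_) this
    apply Finset.sum_congr rfl
    intro k _
    rw [mul_neg, ph_neg]
  · rw [abs_of_pos hpos] at habs h1
    exact core_bound n r.den hn hq0 hr2 r.num hcop x (x - r)
      (by rw [hrd]; ring) (by linarith) habs h1 hns

/-- the sine product -/
noncomputable def S (n : ℕ) (x : ℝ) : ℝ := ∏ k ∈ Finset.range n, (2 * Real.sin (π * (((k:ℝ) + 1) * x)))

lemma log_S {n : ℕ} {x : ℝ} (h : S n x ≠ 0) :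
    Real.log (S n x) = ∑ k ∈ Finset.range n, ph (((k:ℝ) + 1) * x) := by
  unfold S at h ⊢
  rw [Finset.prod_ne_zero_iff] at h
  rw [Real.log_prod h]
  rfl

lemma S_bound (n : ℕ) (hn : 800 ≤ n) (x : ℝ) (hx1 : 1 / (n:ℝ) ≤ x) (hx2 : x ≤ 1/2) :
    |S n x| ≤ n * Real.exp (0.117 * n + 24) := by
  have hnR : (800:ℝ) ≤ n := by exact_mod_cast hn
  by_cases h : S n x = 0
  · rw [h]; simp; positivity
  · have h1 := log_S h
    have h2 := sum_ph_bound n hn x hx1 hx2 (by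
      intro k hk z hz
      have h' : S n x ≠ 0 := h
      unfold S at h'
      rw [Finset.prod_ne_zero_iff] at h'
      apply h' k hk
      rw [sin_pi_eq_zero.2 ⟨z, hz⟩, mul_zero])
    rw [← h1, ← Real.log_abs] at h2
    rw [Real.log_le_iff_le_exp (abs_pos.2 h), Real.exp_add, Real.exp_log (by linarith)] at h2
    linarith

end QP

namespace QP
open Real MeasureTheory

lemma S_pos {n : ℕ} {x : ℝ} (h0 : 0 < x) (h1 : n * x < 1) : 0 < S n x := by
  unfold S
  apply Finset.prod_pos
  intro k hk
  have hk' : (k:ℝ) + 1 ≤ n := by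
    have : k + 1 ≤ n := by simpa using hk
    exact_mod_cast this
  have := sin_pi_pos (t := ((k:ℝ)+1) * x) (by positivity) (by nlinarith)
  positivity

lemma S_nonneg {n : ℕ} {x : ℝ} (h0 : 0 ≤ x) (h1 : n * x ≤ 1) : 0 ≤ S n x := by
  unfold S
  apply Finset.prod_nonneg
  intro k hk
  have hk' : (k:ℝ) + 1 ≤ n := by
    have : k + 1 ≤ n := by simpa using hk
    exact_mod_cast this
  have : 0 ≤ Real.sin (π * (((k:ℝ)+1) * x)) := by
    apply Real.sin_nonneg_of_nonneg_of_le_pi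
    · positivity
    · have : ((k:ℝ)+1) * x ≤ 1 := by nlinarith
      nlinarith [Real.pi_pos]
  positivity

lemma S_cont (n : ℕ) : Continuous (S n) := by
  unfold S; fun_prop

lemma S_eq_exp {n : ℕ} {x : ℝ} (h0 : 0 < x) (h1 : n * x < 1) :
    S n x = Real.exp (∑ k ∈ Finset.range n, ph (((k:ℝ) + 1) * x)) := by
  rw [← log_S (S_pos h0 h1).ne', Real.exp_log (S_pos h0 h1)]

lemma S_lower {n : ℕ} {x : ℝ} (hn : 1 ≤ n) (h1 : 3/4 ≤ (n + 1/2) * x) (h2 : (n + 1/2) * x ≤ 5/6) :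
    Real.exp (0.189 * (n + 1/2)) ≤ S n x := by
  have hx : 0 < x := by
    by_contra h
    push Not at h
    have : ((n:ℝ) + 1/2) * x ≤ 0 := mul_nonpos_of_nonneg_of_nonpos (by positivity) h
    linarith
  have hnR : (1:ℝ) ≤ n := by exact_mod_cast hn
  have hnx : 1 * x ≤ n * x := by gcongr
  rw [S_eq_exp hx (by linarith)]
  apply Real.exp_le_exp.2
  refine le_trans ?_ (sum_ph_ge hx n (by linarith))
  have h3 := Lam_lb h1 h2
  have h4 : Lam (x/2) ≤ 0 := Lam_nonpos (by linarith) (by linarith)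
  rw [le_div_iff₀ hx]
  linarith

lemma sum_ph_le_trap {x : ℝ} (hx : 0 < x) (m : ℕ) (h : (m + 1) * x < 1) :
    ∑ k ∈ Finset.range (m + 1), ph (((k:ℝ) + 1) * x) ≤
      (Lam ((m + 1) * x) - Lam x) / x + ph x / 2 + ph ((m+1) * x) / 2 := by
  induction m with
  | zero => simp
  | succ m ih =>
    rw [Finset.sum_range_succ]
    push_cast at h ⊢
    have ih' := ih (by nlinarith)
    have ht := trap_same (s := (m+1) * x) (h := x) (by positivity) hx (by linarith)
    rw [← Lam_sub, ← le_div_iff₀ hx, show ((m:ℝ)+1) * x + x = (m + 1 + 1) * x by ring] at ht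
    have : (Lam ((m + 1 + 1) * x) - Lam x) / x =
      (Lam ((m + 1) * x) - Lam x) / x + (Lam ((m + 1 + 1) * x) - Lam ((m + 1) * x)) / x := by
      ring
    rw [this]
    linarith

lemma ph_ge_log {x : ℝ} (h0 : 0 < x) (h1 : x ≤ 1/2) : Real.log (4 * x) ≤ ph x := by
  unfold ph
  apply Real.log_le_log (by positivity)
  have := Real.mul_le_sin (x := π * x) (by positivity) (by nlinarith [Real.pi_pos])
  have e : 2 / π * (π * x) = 2 * x := by field_simp
  rw [e] at this
  linarith

/-- near the right end of the first arc the product is smaller than the peak -/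
lemma right_end {n : ℕ} (hn : 800 ≤ n) {x : ℝ} (h1 : 11/12 ≤ n * x) (h2 : n * x < 1) :
    S n x < Real.exp (0.189 * (n + 1/2)) := by
  have hnR : (800:ℝ) ≤ n := by exact_mod_cast hn
  have hx : 0 < x := by
    by_contra h
    push Not at h
    have : (n:ℝ) * x ≤ 0 := mul_nonpos_of_nonneg_of_nonpos (by positivity) h
    linarith
  rw [S_eq_exp hx (by linarith)]
  apply Real.exp_lt_exp.2
  obtain ⟨m, rfl⟩ : ∃ m, n = m + 1 := ⟨n - 1, by omega⟩
  obtain ⟨N, hN⟩ : ∃ N : ℝ, N = ((m + 1 : ℕ) : ℝ) := ⟨_, rfl⟩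
  have hN' : (m:ℝ) + 1 = N := by rw [hN]; push_cast; ring
  rw [← hN] at h1 h2 hnR ⊢
  clear hn
  have ht := sum_ph_le_trap hx m (by rw [hN']; exact h2)
  rw [hN'] at ht
  refine lt_of_le_of_lt ht ?_
  have hx1 : x ≤ 1/2 := by nlinarith
  have hp : ph (N * x) ≤ 0 := ph_nonpos' (by linarith) (by linarith)
  have hL : Lam (N * x) / x ≤ 0.1676 * (12/11) * N := by
    rw [div_le_iff₀ hx]
    have := Lam_le_max (N * x)
    nlinarith
  have hL2 := Lam_ge hx (by linarith)
  have hL3 : - Lam x / x ≤ 1 - ph x := by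
    rw [div_le_iff₀ hx]; linarith
  have hpx := ph_ge_log hx hx1
  have hlog : - Real.log (4 * x) ≤ Real.log (N * (3/11)) := by
    rw [← Real.log_inv]
    apply Real.log_le_log (by positivity)
    rw [inv_le_iff_one_le_mul₀ (by positivity)]
    linarith
  have hlog2 : Real.log (N * (3/11)) ≤ 1 / 200 * N + 2 := by
    have e : N * (3/11) = (200:ℝ) * (N * (3/11) / 200) := by ring
    rw [e, Real.log_mul (by norm_num) (by positivity)]
    have a1 := Real.log_le_sub_one_of_pos (x := N * (3/11) / 200) (by positivity)
    have a2 : Real.log 200 ≤ 5.4 := by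
      have h256 : Real.log 200 ≤ Real.log (2^8) * (1) := by
        rw [mul_one]; apply Real.log_le_log <;> norm_num
      rw [Real.log_pow] at h256
      have := Real.log_two_lt_d9
      have h3 : Real.log (200 ^ 3) ≤ Real.log (2^23) := by
        apply Real.log_le_log <;> norm_num
      rw [Real.log_pow, Real.log_pow] at h3
      push_cast at h3
      linarith
    nlinarith
  have e : (Lam (N * x) - Lam x) / x = Lam (N * x) / x + - Lam x / x := by ring
  rw [e]
  linarith

end QP

namespace QP
open Real MeasureTheory

lemma S_zero {n : ℕ} (hn : 1 ≤ n) : S n 0 = 0 := by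
  unfold S
  apply Finset.prod_eq_zero (i := 0)
  · simp; omega
  · simp

lemma S_end {n : ℕ} (hn : 1 ≤ n) {x : ℝ} (hx : n * x = 1) : S n x = 0 := by
  unfold S
  apply Finset.prod_eq_zero (i := n - 1)
  · simp; omega
  · have : (((n - 1 : ℕ) : ℝ) + 1) = n := by rw [Nat.cast_sub hn]; simp
    rw [this, hx]; simp

lemma left_end {n : ℕ} (hn : 800 ≤ n) {x : ℝ} (h1 : 0 < x) (h2 : n * x ≤ 1/2) :
    S n x < Real.exp (0.189 * (n + 1/2)) := by
  have hnR : (800:ℝ) ≤ n := by exact_mod_cast hn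
  rw [S_eq_exp h1 (by linarith)]
  apply Real.exp_lt_exp.2
  obtain ⟨m, rfl⟩ : ∃ m, n = m + 1 := ⟨n - 1, by omega⟩
  obtain ⟨N, hN⟩ : ∃ N : ℝ, N = ((m + 1 : ℕ) : ℝ) := ⟨_, rfl⟩
  have hN' : (m:ℝ) + 1 = N := by rw [hN]; push_cast; ring
  rw [← hN] at h2 hnR ⊢
  clear hn
  have ht := sum_ph_le_trap h1 m (by rw [hN']; linarith)
  rw [hN'] at ht
  refine lt_of_le_of_lt ht ?_
  have h3 := small_A h1 (M := N) (by linarith) h2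
  have h4 := neg_Lam_div_le (z := 1/(2*N)) (by positivity)
    (by rw [div_lt_one (by linarith)]; linarith) (n := N) (by linarith)
    (by have : 4 * (1/(2*N)) = 2 / N := by field_simp; norm_num
        rw [this]; gcongr; norm_num)
  have h5 := ph_le x
  have h6 := ph_le (N * x)
  have h7 := Real.log_two_lt_d9
  have hlog : Real.log N ≤ N / 8 + 2 := by
    have e : N = (2:ℝ)^3 * (N / 8) := by ring
    have a1 := Real.log_le_sub_one_of_pos (x := N / 8) (by linarith)
    have a2 : Real.log N = 3 * Real.log 2 + Real.log (N / 8) := by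
      conv_lhs => rw [e]
      rw [Real.log_mul (by norm_num) (by positivity), Real.log_pow]
      norm_num
    linarith
  linarith

lemma exists_peak {n : ℕ} (hn : 800 ≤ n) : ∃ x₀ : ℝ, 1/2 < n * x₀ ∧ n * x₀ < 11/12 ∧
    (∀ x : ℝ, 0 ≤ x → n * x ≤ 1 → S n x ≤ S n x₀) ∧ Real.exp (0.189 * (n + 1/2)) ≤ S n x₀ := by
  have hnR : (800:ℝ) ≤ n := by exact_mod_cast hn
  have hn1 : 1 ≤ n := by omega
  have hn0 : (0:ℝ) < n := by linarith
  obtain ⟨x₀, hx₀, hmax⟩ := (isCompact_Icc (a := (0:ℝ)) (b := 1/n)).exists_isMaxOn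
    ⟨0, by constructor <;> positivity⟩ (S_cont n).continuousOn
  have hm : ∀ x : ℝ, 0 ≤ x → n * x ≤ 1 → S n x ≤ S n x₀ := by
    intro x h0 h1
    apply hmax
    refine ⟨h0, ?_⟩
    rw [le_div_iff₀ hn0]; linarith
  have hE : Real.exp (0.189 * (n + 1/2)) ≤ S n x₀ := by
    have h34 : (n + 1/2) * (3/4/((n:ℝ)+1/2)) = 3/4 := by field_simp
    refine (S_lower (x := 3/4/((n:ℝ)+1/2)) hn1 ?_ ?_).trans (hm _ (by positivity) ?_)
    · rw [h34]
    · rw [h34]; norm_num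
    · have : 0 < 3/4/((n:ℝ)+1/2) := by positivity
      linarith
  have hEp := Real.exp_pos (0.189 * ((n:ℝ) + 1/2))
  have hx0 : 0 < x₀ := by
    rcases hx₀.1.eq_or_lt with h | h
    · rw [← h, S_zero hn1] at hE; linarith
    · exact h
  have hx1 : n * x₀ ≤ 1 := by
    have := hx₀.2
    rw [le_div_iff₀ hn0] at this; linarith
  have hx1' : n * x₀ < 1 := by
    rcases hx1.eq_or_lt with h | h
    · rw [S_end hn1 h] at hE; linarith
    · exact h
  refine ⟨x₀, ?_, ?_, hm, hE⟩
  · by_contra h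
    push Not at h
    have := left_end hn hx0 h
    linarith
  · by_contra h
    push Not at h
    have := right_end hn h hx1'
    linarith

lemma logS_concave (n : ℕ) : ConcaveOn ℝ {x : ℝ | 0 < x ∧ n * x < 1}
    (fun x => ∑ k ∈ Finset.range n, ph (((k:ℝ) + 1) * x)) := by
  have hconv : Convex ℝ {x : ℝ | 0 < x ∧ n * x < 1} := by
    intro x hx y hy a b ha hb hab
    simp only [Set.mem_ofPred_eq, smul_eq_mul] at hx hy ⊢
    refine ⟨(convex_Ioi (0:ℝ)) hx.1 hy.1 ha hb hab, ?_⟩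
    have := (convex_Iio (1:ℝ)) hx.2 hy.2 ha hb hab
    simp only [smul_eq_mul, Set.mem_Iio] at this
    linarith
  refine ⟨hconv, ?_⟩
  intro x hx y hy a b ha hb hab
  simp only [smul_eq_mul]
  rw [Finset.mul_sum, Finset.mul_sum, ← Finset.sum_add_distrib]
  apply Finset.sum_le_sum
  intro k hk
  have hk' : (k:ℝ) + 1 ≤ n := by
    have : k + 1 ≤ n := by simpa using hk
    exact_mod_cast this
  have mem : ∀ w ∈ {x : ℝ | 0 < x ∧ n * x < 1}, ((k:ℝ)+1) * w ∈ Set.Ioo (0:ℝ) 1 := by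
    intro w hw
    have h0 : 0 < w := hw.1
    have h1 : n * w < 1 := hw.2
    exact ⟨by positivity, by nlinarith⟩
  have := logsin_concave.2 (mem x hx) (mem y hy) ha hb hab
  simp only [smul_eq_mul] at this
  rw [show ((k:ℝ)+1) * (a * x + b * y) = a * ((k + 1) * x) + b * ((k + 1) * y) by ring]
  exact this

lemma S_min_le {n : ℕ} {x y z : ℝ} (hx : 0 < x) (hz : n * z < 1) (hxy : x ≤ y) (hyz : y ≤ z) :
    min (S n x) (S n z) ≤ S n y := by
  have hn0 : (0:ℝ) ≤ n := by positivity
  have hx1 : n * x < 1 := by nlinarith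
  have hy1 : n * y < 1 := by nlinarith
  rw [S_eq_exp hx hx1, S_eq_exp (by linarith : 0 < y) hy1, S_eq_exp (by linarith : 0 < z) hz]
  have := (logS_concave n).min_le_of_mem_Icc (x := x) (y := z) (z := y) ⟨hx, hx1⟩ ⟨by linarith, hz⟩ ⟨hxy, hyz⟩
  beta_reduce at this
  rcases min_le_iff.1 this with h | h
  · exact (min_le_left _ _).trans (Real.exp_le_exp.2 h)
  · exact (min_le_right _ _).trans (Real.exp_le_exp.2 h)

lemma S_mono {n : ℕ} (hn : 1 ≤ n) {x₀ : ℝ} (hx : n * x₀ < 1)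
    (hm : ∀ x : ℝ, 0 ≤ x → n * x ≤ 1 → S n x ≤ S n x₀) : MonotoneOn (S n) (Set.Icc 0 x₀) := by
  intro x hx' y hy hxy
  have hn0 : (0:ℝ) ≤ n := by positivity
  have hy1 : n * y ≤ 1 := by nlinarith [hy.2]
  have hx1 : n * x ≤ 1 := by nlinarith [hx'.2]
  rcases hx'.1.eq_or_lt with h | h
  · rw [← h, S_zero hn]; exact S_nonneg hy.1 hy1
  · have := S_min_le h hx hxy hy.2
    rwa [min_eq_left (hm x hx'.1 hx1)] at this

lemma S_anti {n : ℕ} (hn : 1 ≤ n) {x₀ : ℝ} (hx0 : 0 < x₀)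
    (hm : ∀ x : ℝ, 0 ≤ x → n * x ≤ 1 → S n x ≤ S n x₀) : AntitoneOn (S n) (Set.Icc x₀ (1/n)) := by
  intro x hx' y hy hxy
  have hn0 : (0:ℝ) < n := by positivity
  have hy1 : n * y ≤ 1 := by
    have := hy.2
    rw [le_div_iff₀ hn0] at this; linarith
  have hx1 : n * x ≤ 1 := by nlinarith
  rcases hy1.eq_or_lt with h | h
  · rw [S_end hn h]; exact S_nonneg (by linarith [hx'.1]) hx1
  · have := S_min_le hx0 h hx'.1 hxy
    rwa [min_eq_right (hm y (by linarith [hy.1]) hy1)] at this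

end QP

namespace QP
open Real MeasureTheory

lemma one_sub_sum_le (s : Finset ℕ) (r : ℕ → ℝ) (h0 : ∀ k ∈ s, 0 ≤ r k) (h1 : ∀ k ∈ s, r k ≤ 1) :
    1 - ∑ k ∈ s, r k ≤ ∏ k ∈ s, (1 - r k) ∧ 0 ≤ ∏ k ∈ s, (1 - r k) ∧ ∏ k ∈ s, (1 - r k) ≤ 1 := by
  induction s using Finset.induction_on with
  | empty => simp
  | insert a s ha ih =>
    rw [Finset.sum_insert ha, Finset.prod_insert ha]
    obtain ⟨i1, i2, i3⟩ := ih (fun k hk => h0 k (Finset.mem_insert_of_mem hk))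
      (fun k hk => h1 k (Finset.mem_insert_of_mem hk))
    have a0 := h0 a (Finset.mem_insert_self _ _)
    have a1 := h1 a (Finset.mem_insert_self _ _)
    refine ⟨by nlinarith, by nlinarith, by nlinarith⟩

lemma sum_inv_sq {x : ℝ} (hx : 0 < x) (j : ℕ) (h : j * x < 1) :
    ∑ k ∈ Finset.range j, 1 / (1 - ((k:ℝ) + 1) * x)^2 ≤ 1 / (1 - j * x)^2 + 1 / (x * (1 - j * x)) := by
  induction j with
  | zero => simp; positivity
  | succ j ih =>
    rw [Finset.sum_range_succ]
    push_cast at h ⊢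
    have ih' := ih (by nlinarith)
    obtain ⟨u, hu⟩ : ∃ u, u = 1 - (j:ℝ) * x := ⟨_, rfl⟩
    have e : 1 - ((j:ℝ) + 1) * x = u - x := by rw [hu]; ring
    rw [e]
    rw [← hu] at ih'
    have hux : 0 < u - x := by rw [← e]; linarith
    have hu0 : 0 < u := by linarith
    have : 1 / u^2 + 1 / (x * u) ≤ 1 / (x * (u - x)) := by
      rw [div_add_div _ _ (by positivity) (by positivity), div_le_div_iff₀ (by positivity) (by positivity)]
      have : 0 ≤ x^3 * u := by positivity
      nlinarith
    linarith

lemma sin_ge_min {v : ℝ} (h0 : 0 < v) (h1 : v < 1) :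
    1 / (Real.sin (π * v))^2 ≤ 1 / (4 * v^2) + 1 / (4 * (1 - v)^2) := by
  have hs := sin_pi_pos h0 h1
  rcases le_total v (1/2) with h | h
  · have := Real.mul_le_sin (x := π * v) (by positivity) (by nlinarith [Real.pi_pos])
    rw [show 2 / π * (π * v) = 2 * v by field_simp] at this
    have h2 : 1 / (Real.sin (π * v))^2 ≤ 1 / (2 * v)^2 := by gcongr
    have h3 : (2 * v)^2 = 4 * v^2 := by ring
    rw [h3] at h2
    have : 0 ≤ 1 / (4 * (1 - v)^2) := by positivity
    linarith
  · have := Real.mul_le_sin (x := π * (1 - v)) (by apply mul_nonneg Real.pi_pos.le; linarith)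
      (by nlinarith [Real.pi_pos])
    rw [show 2 / π * (π * (1 - v)) = 2 * (1 - v) by field_simp,
      show π * (1 - v) = π - π * v by ring, Real.sin_pi_sub] at this
    have h1v : 0 < 1 - v := by linarith
    have h2 : 1 / (Real.sin (π * v))^2 ≤ 1 / (2 * (1 - v))^2 := by gcongr
    have h3 : (2 * (1 - v))^2 = 4 * (1 - v)^2 := by ring
    rw [h3] at h2
    have : 0 ≤ 1 / (4 * v^2) := by positivity
    linarith

lemma S_pm (n : ℕ) {x : ℝ} (t : ℝ) (h0 : 0 < x) (h1 : n * x < 1) :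
    S n (x + t) * S n (x - t) = S n x ^ 2 * ∏ k ∈ Finset.range n,
      (1 - (Real.sin (π * ((k + 1) * t)))^2 / (Real.sin (π * ((k + 1) * x)))^2) := by
  unfold S
  rw [← Finset.prod_mul_distrib, ← Finset.prod_pow, ← Finset.prod_mul_distrib]
  apply Finset.prod_congr rfl
  intro k hk
  have hk' : (k:ℝ) + 1 ≤ n := by
    have : k + 1 ≤ n := by simpa using hk
    exact_mod_cast this
  have := sin_pi_pos (t := ((k:ℝ)+1) * x) (by positivity) (by nlinarith)
  have e1 : π * (((k:ℝ) + 1) * (x + t)) = π * ((k + 1) * x) + π * ((k+1) * t) := by ring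
  have e2 : π * (((k:ℝ) + 1) * (x - t)) = π * ((k + 1) * x) - π * ((k+1) * t) := by ring
  rw [e1, e2, Real.sin_add, Real.sin_sub]
  have c1 := Real.sin_sq_add_cos_sq (π * (((k:ℝ) + 1) * x))
  have c2 := Real.sin_sq_add_cos_sq (π * (((k:ℝ) + 1) * t))
  generalize Real.sin (π * (((k:ℝ) + 1) * x)) = s at *
  generalize Real.cos (π * (((k:ℝ) + 1) * x)) = c at *
  generalize Real.sin (π * (((k:ℝ) + 1) * t)) = s1 at *
  generalize Real.cos (π * (((k:ℝ) + 1) * t)) = d1 at *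
  have e3 : (2*s)^2*(1-s1^2/s^2) = 4*(s^2 - s1^2) := by
    have : s ≠ 0 := ne_of_gt ‹0 < s›
    field_simp
    ring
  rw [e3]
  linear_combination 4*s^2*c2 - 4*s1^2*c1

lemma sum_r_le {n : ℕ} (hn : 800 ≤ n) {x : ℝ} (t : ℝ) (h1 : 1/2 < n * x) (h2 : n * x < 11/12) :
    ∑ k ∈ Finset.range n, (Real.sin (π * ((k + 1) * t)))^2 / (Real.sin (π * ((k + 1) * x)))^2
      ≤ 48 * n^3 * t^2 := by
  have hnR : (800:ℝ) ≤ n := by exact_mod_cast hn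
  have hx : 0 < x := by
    by_contra h
    push Not at h
    have : (n:ℝ) * x ≤ 0 := mul_nonpos_of_nonneg_of_nonpos (by positivity) h
    linarith
  have hpi : π^2 ≤ 10 := by nlinarith [Real.pi_lt_d2, Real.pi_pos]
  have hterm : ∀ k ∈ Finset.range n, (Real.sin (π * ((k + 1) * t)))^2 / (Real.sin (π * ((k + 1) * x)))^2
      ≤ 10 * t^2 / 4 * (1 / x^2 + n^2 * (1 / (1 - ((k:ℝ) + 1) * x)^2)) := by
    intro k hk
    have hk' : (k:ℝ) + 1 ≤ n := by
      have : k + 1 ≤ n := by simpa using hk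
      exact_mod_cast this
    have hkx : ((k:ℝ) + 1) * x < 1 := by nlinarith
    have hb := sin_ge_min (v := ((k:ℝ)+1) * x) (by positivity) hkx
    have hs : (Real.sin (π * ((k + 1) * t)))^2 ≤ 10 * (((k:ℝ) + 1)^2 * t^2) := by
      have a1 := sq_le_sq' (neg_le_of_abs_le (Real.abs_sin_le_abs (x := π * ((k + 1) * t)))) (le_of_abs_le (Real.abs_sin_le_abs (x := π * ((k + 1) * t))))
      rw [sq_abs] at a1
      have : (π * (((k:ℝ) + 1) * t))^2 = π^2 * ((k + 1)^2 * t^2) := by ring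
      rw [this] at a1
      have h3 : 0 ≤ ((k:ℝ) + 1)^2 * t^2 := by positivity
      nlinarith
    have h1kx : 0 < 1 - ((k:ℝ) + 1) * x := by linarith
    calc (Real.sin (π * ((k + 1) * t)))^2 / (Real.sin (π * ((k + 1) * x)))^2
        = (Real.sin (π * ((k + 1) * t)))^2 * (1 / (Real.sin (π * ((k + 1) * x)))^2) := by ring
      _ ≤ 10 * (((k:ℝ) + 1)^2 * t^2) * (1 / (4 * (((k:ℝ)+1) * x)^2) + 1 / (4 * (1 - ((k:ℝ)+1) * x)^2)) := by
          apply mul_le_mul hs hb (by positivity) (by positivity)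
      _ = 10 * t^2 / 4 * (1 / x^2 + ((k:ℝ)+1)^2 * (1 / (1 - ((k:ℝ) + 1) * x)^2)) := by
          field_simp
      _ ≤ _ := by gcongr
  refine (Finset.sum_le_sum hterm).trans ?_
  rw [← Finset.mul_sum, Finset.sum_add_distrib, ← Finset.mul_sum]
  have hsq := sum_inv_sq hx n (by linarith)
  simp only [Finset.sum_const, Finset.card_range, nsmul_eq_mul]
  have hx2 : 1 / x^2 ≤ 4 * n^2 := by
    rw [div_le_iff₀ (by positivity)]
    nlinarith
  have h3 : 1 / (1 - n * x)^2 ≤ 144 := by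
    rw [div_le_iff₀ (by apply pow_pos; linarith)]
    nlinarith
  have h4 : 1 / (x * (1 - n * x)) ≤ 14 * n := by
    rw [div_le_iff₀ (by apply mul_pos hx; linarith)]
    nlinarith
  have h5 : ∑ k ∈ Finset.range n, 1 / (1 - ((k:ℝ) + 1) * x)^2 ≤ 144 + 14 * (n:ℝ) := by linarith
  have h6 : (n:ℝ) * (1 / x^2) + n^2 * ∑ k ∈ Finset.range n, 1 / (1 - ((k:ℝ) + 1) * x)^2 ≤
      n * (4 * n^2) + n^2 * (144 + 14 * n) := by gcongr
  have h7 : (n:ℝ) * (4 * n^2) + n^2 * (144 + 14 * n) ≤ 19.2 * n^3 := by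
    have : 0 ≤ (n:ℝ)^2 * (n - 800) := by
      apply mul_nonneg (by positivity); linarith
    nlinarith
  refine (mul_le_mul_of_nonneg_left (h6.trans h7) (by positivity)).trans (le_of_eq (by ring))

lemma S_quad {n : ℕ} (hn : 800 ≤ n) {x₀ : ℝ} (t : ℝ) (h1 : 1/2 < n * x₀) (h2 : n * x₀ < 11/12)
    (hm : ∀ x : ℝ, 0 ≤ x → n * x ≤ 1 → S n x ≤ S n x₀) (ht : n * |t| ≤ 1/12)
    (ht2 : 48 * n^3 * t^2 ≤ 1) :
    S n x₀ * (1 - 48 * n^3 * t^2) ≤ S n (x₀ + t) := by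
  have hnR : (800:ℝ) ≤ n := by exact_mod_cast hn
  have hx : 0 < x₀ := by
    by_contra h
    push Not at h
    have : (n:ℝ) * x₀ ≤ 0 := mul_nonpos_of_nonneg_of_nonpos (by positivity) h
    linarith
  have hp := S_pos hx (by linarith : n * x₀ < 1)
  have hpm := S_pm n t hx (by linarith)
  have hsum := sum_r_le hn t h1 h2
  have hr0 : ∀ k ∈ Finset.range n, 0 ≤ (Real.sin (π * ((k + 1) * t)))^2 / (Real.sin (π * ((k + 1) * x₀)))^2 := by
    intro k _; positivity
  obtain ⟨i1, i2, i3⟩ := one_sub_sum_le (Finset.range n) _ hr0 (by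
    intro k hk
    exact (Finset.single_le_sum hr0 hk).trans (hsum.trans ht2))
  have htb := abs_le.1 (show |n * t| ≤ 1/12 by rw [abs_mul, abs_of_pos (by linarith : (0:ℝ) < n)]; exact ht)
  have hp0 : 0 ≤ x₀ + t := by
    by_contra h
    push Not at h
    have : (n:ℝ) * (x₀ + t) ≤ 0 := mul_nonpos_of_nonneg_of_nonpos (by positivity) h.le
    linarith [htb.1]
  have hm0 : 0 ≤ x₀ - t := by
    by_contra h
    push Not at h
    have : (n:ℝ) * (x₀ - t) ≤ 0 := mul_nonpos_of_nonneg_of_nonpos (by positivity) h.le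
    linarith [htb.2]
  have a1 := hm (x₀ - t) hm0 (by linarith [htb.1])
  have a2 := S_nonneg hp0 (by linarith [htb.2] : n * (x₀ + t) ≤ 1)
  have a3 : S n x₀ ^ 2 * (1 - 48 * n^3 * t^2) ≤ S n (x₀ + t) * S n x₀ := by
    calc S n x₀ ^ 2 * (1 - 48 * n^3 * t^2) ≤ S n x₀ ^ 2 * _ := by
          apply mul_le_mul_of_nonneg_left _ (by positivity)
          exact (by linarith : 1 - 48 * (n:ℝ)^3 * t^2 ≤ 1 - ∑ k ∈ Finset.range n,
            (Real.sin (π * ((k + 1) * t)))^2 / (Real.sin (π * ((k + 1) * x₀)))^2).trans i1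
      _ = S n (x₀ + t) * S n (x₀ - t) := hpm.symm
      _ ≤ _ := by gcongr
  nlinarith

lemma F_lower {n : ℕ} (hn : 800 ≤ n) {x₀ : ℝ} (h1 : 1/2 < n * x₀) (h2 : n * x₀ < 11/12)
    (hm : ∀ x : ℝ, 0 ≤ x → n * x ≤ 1 → S n x ≤ S n x₀) :
    4.9 / n^2 * S n x₀ ≤ ∫ x in (0:ℝ)..(1/n), S n x := by
  have hnR : (800:ℝ) ≤ n := by exact_mod_cast hn
  have hn0 : (0:ℝ) < n := by linarith
  have hx : 0 < x₀ := by
    by_contra h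
    push Not at h
    have : (n:ℝ) * x₀ ≤ 0 := mul_nonpos_of_nonneg_of_nonpos (by positivity) h
    linarith
  have hp := S_pos hx (by linarith : n * x₀ < 1)
  obtain ⟨d, hd⟩ : ∃ d : ℝ, d = 3 / n^2 := ⟨_, rfl⟩
  have hd0 : 0 < d := by rw [hd]; positivity
  have hnd : n * d ≤ 1/12 := by
    have : n * d = 3 / n := by rw [hd]; field_simp
    rw [this, div_le_iff₀ hn0]; linarith
  have hnd3 : n^3 * d^2 = 9 / n := by rw [hd]; field_simp; norm_num
  have h9 : 9 / (n:ℝ) ≤ 9 / 800 := by gcongr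
  have hq : ∀ u ∈ Set.Icc (-d) d, S n x₀ * (1 - 48 * n^3 * u^2) ≤ S n (x₀ + u) := by
    intro u hu
    have hu' : |u| ≤ d := abs_le.2 hu
    have husq : u^2 ≤ d^2 := sq_le_sq' hu.1 hu.2
    apply S_quad hn u h1 h2 hm
    · calc n * |u| ≤ n * d := by gcongr
        _ ≤ _ := hnd
    · calc 48 * (n:ℝ)^3 * u^2 ≤ 48 * n^3 * d^2 := by gcongr
        _ = 48 * (n^3 * d^2) := by ring
        _ ≤ 1 := by rw [hnd3]; linarith
  have hcs : Continuous (fun u => S n (x₀ + u)) := (S_cont n).comp (by fun_prop)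
  have hI := intervalIntegral.integral_mono_on (a := -d) (b := d) (μ := volume) (by linarith)
    (Continuous.intervalIntegrable (by fun_prop) _ _) (hcs.intervalIntegrable _ _) hq
  have e1 : ∫ u in (-d)..d, S n x₀ * (1 - 48 * n^3 * u^2) = S n x₀ * (2 * d - 32 * (n^3 * d^2) * d) := by
    rw [intervalIntegral.integral_const_mul, intervalIntegral.integral_sub (by simp)
      (Continuous.intervalIntegrable (by fun_prop) _ _), intervalIntegral.integral_const_mul, integral_pow]
    simp
    left
    ring
  have e2 : ∫ u in (-d)..d, S n (x₀ + u) = ∫ x in (x₀ - d)..(x₀ + d), S n x := by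
    rw [intervalIntegral.integral_comp_add_left]; rfl
  rw [e1, e2, hnd3] at hI
  have hsub : ∫ x in (x₀ - d)..(x₀ + d), S n x ≤ ∫ x in (0:ℝ)..(1/n), S n x := by
    apply intervalIntegral.integral_mono_interval
    · by_contra h
      push Not at h
      have : (n:ℝ) * (x₀ - d) ≤ 0 := mul_nonpos_of_nonneg_of_nonpos (by positivity) h.le
      linarith
    · linarith
    · rw [le_div_iff₀ hn0]; linarith
    · rw [Filter.EventuallyLE, ae_restrict_iff' measurableSet_Ioc]
      refine Filter.Eventually.of_forall ?_
      intro x hx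
      apply S_nonneg hx.1.le
      have := hx.2
      rw [le_div_iff₀ hn0] at this
      linarith
    · exact (S_cont n).intervalIntegrable _ _
  refine le_trans ?_ (hI.trans hsub)
  have h5 : 4.9 / (n:ℝ)^2 ≤ 2 * d - 32 * (9 / n) * d := by
    have : 4.9 / (n:ℝ)^2 = 4.9 / 3 * d := by rw [hd]; ring
    rw [this]
    nlinarith
  rw [mul_comm]
  gcongr

end QP

namespace QP
open Real MeasureTheory

lemma S_contDiff (n : ℕ) : ContDiff ℝ 1 (S n) := by
  unfold S
  apply contDiff_prod
  intro k _
  apply ContDiff.mul contDiff_const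
  apply Real.contDiff_sin.comp
  fun_prop

lemma S_hasDeriv (n : ℕ) (x : ℝ) : HasDerivAt (S n) (deriv (S n) x) x :=
  ((S_contDiff n).differentiable (by norm_num) x).hasDerivAt

lemma S_deriv_cont (n : ℕ) : Continuous (deriv (S n)) := (S_contDiff n).continuous_deriv (le_refl _)

lemma half_bound (n : ℕ) {a b : ℝ} (hab : a < b) (v : ℝ → ℝ) (c s : ℝ) (hv : ∀ x, |v x| ≤ c)
    (hd : ∀ x ∈ Set.Icc a b, |deriv (S n) x| = s * deriv (S n) x) :
    |∫ x in a..b, deriv (S n) x * v x| ≤ c * (s * (S n b - S n a)) := by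
  have h := intervalIntegral.norm_integral_le_of_norm_le (μ := volume) (f := fun x => deriv (S n) x * v x)
    (g := fun x => c * (s * deriv (S n) x)) hab.le
    (Filter.Eventually.of_forall (by
      intro x hx
      have hx' : x ∈ Set.Icc a b := ⟨hx.1.le, hx.2⟩
      rw [Real.norm_eq_abs, abs_mul, ← hd x hx', mul_comm]
      exact mul_le_mul_of_nonneg_right (hv x) (abs_nonneg _)))
    (Continuous.intervalIntegrable (by have := S_deriv_cont n; fun_prop) _ _)
  rw [intervalIntegral.integral_const_mul, intervalIntegral.integral_const_mul,
    intervalIntegral.integral_eq_sub_of_hasDerivAt (fun x _ => S_hasDeriv n x)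
      ((S_deriv_cont n).intervalIntegrable _ _)] at h
  exact h

lemma osc {n : ℕ} (hn : 800 ≤ n) {x₀ : ℝ} (h1 : 1/2 < n * x₀) (h2 : n * x₀ < 11/12)
    (hm : ∀ x : ℝ, 0 ≤ x → n * x ≤ 1 → S n x ≤ S n x₀) {m : ℝ} (hm0 : 0 < m) :
    |∫ x in (0:ℝ)..(1/n), S n x * Real.cos (m * x)| ≤ 2 * S n x₀ / m := by
  have hnR : (800:ℝ) ≤ n := by exact_mod_cast hn
  have hn0 : (0:ℝ) < n := by linarith
  have hx : 0 < x₀ := by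
    by_contra h
    push Not at h
    have : (n:ℝ) * x₀ ≤ 0 := mul_nonpos_of_nonneg_of_nonpos (by positivity) h
    linarith
  have hx1 : x₀ < 1 / n := by rw [lt_div_iff₀ hn0]; linarith
  have hz := S_zero (n := n) (by omega)
  have he := S_end (n := n) (by omega) (x := 1/n) (by field_simp)
  have hmo := S_mono (n := n) (by omega) (by linarith) hm
  have han := S_anti (n := n) (by omega) hx hm
  have hd1 : ∀ x ∈ Set.Icc 0 x₀, |deriv (S n) x| = 1 * deriv (S n) x := by
    intro x hxm
    have e := (S_hasDeriv n x).differentiableAt.derivWithin (uniqueDiffOn_Icc hx x hxm)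
    rw [one_mul, abs_of_nonneg]
    rw [← e]
    exact hmo.derivWithin_nonneg
  have hd2 : ∀ x ∈ Set.Icc x₀ (1/n), |deriv (S n) x| = (-1) * deriv (S n) x := by
    intro x hxm
    have e := (S_hasDeriv n x).differentiableAt.derivWithin (uniqueDiffOn_Icc hx1 x hxm)
    rw [neg_one_mul, abs_of_nonpos]
    rw [← e]
    exact han.derivWithin_nonpos
  have hv : ∀ x : ℝ, |Real.sin (m * x) / m| ≤ 1 / m := by
    intro x
    rw [abs_div, abs_of_pos hm0]
    gcongr
    exact Real.abs_sin_le_one _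
  have b1 := half_bound n hx (fun x => Real.sin (m * x) / m) (1/m) 1 hv hd1
  have b2 := half_bound n hx1 (fun x => Real.sin (m * x) / m) (1/m) (-1) hv hd2
  have hvd : ∀ x : ℝ, HasDerivAt (fun x => Real.sin (m * x) / m) (Real.cos (m * x)) x := by
    intro x
    have := (((hasDerivAt_id x).const_mul m).sin).div_const m
    have e : Real.cos (m * x) = Real.cos (m * id x) * (m * 1) / m := by
      rw [id]; field_simp
    rw [e]
    exact this
  have ibp := intervalIntegral.integral_mul_deriv_eq_deriv_mul (a := 0) (b := 1/(n:ℝ)) (fun x _ => S_hasDeriv n x) (fun x _ => hvd x)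
    ((S_deriv_cont n).intervalIntegrable _ _) (Continuous.intervalIntegrable (by fun_prop) _ _)
  rw [hz] at b1 ibp
  rw [he] at b2 ibp
  have hci : Continuous (fun x => deriv (S n) x * (Real.sin (m * x) / m)) := by
    have := S_deriv_cont n
    fun_prop
  have hadd := intervalIntegral.integral_add_adjacent_intervals (μ := volume) (hci.intervalIntegrable 0 x₀) (hci.intervalIntegrable x₀ (1/n))
  rw [ibp, ← hadd]
  have := abs_add_le (∫ x in (0:ℝ)..x₀, deriv (S n) x * (Real.sin (m * x) / m)) (∫ x in x₀..(1/n), deriv (S n) x * (Real.sin (m * x) / m))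
  have e : 2 * S n x₀ / m = 1 / m * (1 * (S n x₀ - 0)) + 1 / m * (-1 * (0 - S n x₀)) := by ring
  rw [e]
  simp only [zero_mul, sub_self, zero_sub, abs_neg]
  simp only [zero_sub] at b1 b2
  linarith
end QP

namespace QP
open Real MeasureTheory

lemma num_main {n : ℕ} (hn : 800 ≤ n) :
    20 * ((n:ℝ) + 1/2)^3 * n * exp (0.117 * n + 24) ≤ exp (0.189 * ((n:ℝ) + 1/2)) := by
  have hnR : (800:ℝ) ≤ n := by exact_mod_cast hn
  have h1 : (n:ℝ) ≤ 800 * exp ((n:ℝ)/800 - 1) := by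
    have := Real.add_one_le_exp ((n:ℝ)/800 - 1)
    linarith
  have h4 : (n:ℝ)^4 ≤ 800^4 * exp ((n:ℝ)/200 - 4) := by
    calc (n:ℝ)^4 ≤ (800 * exp ((n:ℝ)/800 - 1))^4 := by gcongr
      _ = _ := by rw [mul_pow, ← Real.exp_nat_mul]; congr 2; push_cast; ring
  have h32 : 20.1 * (800:ℝ)^4 ≤ exp 32 := by
    have e1 : (2.7:ℝ) ≤ exp 1 := by linarith [Real.exp_one_gt_d9]
    have : exp 32 = (exp 1)^32 := by rw [← Real.exp_nat_mul]; norm_num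
    rw [this]
    calc 20.1 * (800:ℝ)^4 ≤ 2.7^32 := by norm_num
      _ ≤ _ := by gcongr
  have h5 : 20 * ((n:ℝ) + 1/2)^3 * n ≤ 20.1 * n^4 := by
    have : (n:ℝ) + 1/2 ≤ 801/800 * n := by linarith
    calc 20 * ((n:ℝ) + 1/2)^3 * n ≤ 20 * (801/800 * n)^3 * n := by gcongr
      _ = 20 * (801/800)^3 * (n:ℝ)^4 := by ring
      _ ≤ _ := by gcongr; norm_num
  calc 20 * ((n:ℝ) + 1/2)^3 * n * exp (0.117 * n + 24) ≤ 20.1 * (800^4 * exp ((n:ℝ)/200 - 4)) * exp (0.117 * n + 24) := by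
        apply mul_le_mul_of_nonneg_right _ (Real.exp_pos _).le
        exact h5.trans (by gcongr)
    _ = (20.1 * 800^4) * exp ((n:ℝ)/200 - 4) * exp (0.117 * n + 24) := by ring
    _ ≤ exp 32 * exp ((n:ℝ)/200 - 4) * exp (0.117 * n + 24) := by gcongr
    _ = exp (32 + ((n:ℝ)/200 - 4) + (0.117 * n + 24)) := by rw [Real.exp_add (32 + ((n:ℝ)/200 - 4)), Real.exp_add 32]
    _ ≤ _ := by apply Real.exp_le_exp.2; linarith

lemma J_lower {n : ℕ} (hn : 1 ≤ n) {h : ℝ → ℝ} (hc : Continuous h)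
    (h0 : ∀ x : ℝ, 0 ≤ x → n * x ≤ 1 → 0 ≤ h x) (c : ℝ)
    (hJ : ∀ x : ℝ, 3/4 ≤ ((n:ℝ) + 1/2) * x → ((n:ℝ) + 1/2) * x ≤ 5/6 → c ≤ h x) :
    c / (12 * ((n:ℝ) + 1/2)) ≤ ∫ x in (0:ℝ)..(1/n), h x := by
  have hnR : (1:ℝ) ≤ n := by exact_mod_cast hn
  have hn0 : (0:ℝ) < n := by linarith
  obtain ⟨p, hp⟩ : ∃ p : ℝ, p = (n:ℝ) + 1/2 := ⟨_, rfl⟩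
  rw [← hp] at hJ ⊢
  have hp0 : 0 < p := by linarith
  have h34 : 3/4/p ≤ 5/6/p := div_le_div_of_nonneg_right (by norm_num) hp0.le
  have hI := intervalIntegral.integral_mono_on (a := 3/4/p) (b := 5/6/p) (μ := volume)
    (f := fun _ => c) (g := h) h34
    (by simp) (hc.intervalIntegrable _ _) (by
      intro x hx
      apply hJ x
      · have := hx.1; rw [div_le_iff₀ hp0] at this; linarith
      · have := hx.2; rw [le_div_iff₀ hp0] at this; linarith)
  rw [intervalIntegral.integral_const] at hI
  have hsub : ∫ x in (3/4/p)..(5/6/p), h x ≤ ∫ x in (0:ℝ)..(1/n), h x := by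
    apply intervalIntegral.integral_mono_interval
    · positivity
    · exact h34
    · apply div_le_div₀ <;> linarith
    · rw [Filter.EventuallyLE, ae_restrict_iff' measurableSet_Ioc]
      refine Filter.Eventually.of_forall ?_
      intro x hx
      apply h0 x hx.1.le
      have := hx.2
      rw [le_div_iff₀ hn0] at this
      linarith
    · exact hc.intervalIntegrable _ _
  refine le_trans (le_of_eq ?_) (hI.trans hsub)
  rw [smul_eq_mul]
  field_simp
  ring

lemma abs_sin_mul_le (k : ℕ) (t : ℝ) : |Real.sin (k * t)| ≤ k * |Real.sin t| := by
  induction k with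
  | zero => simp
  | succ k ih =>
    push_cast
    rw [add_mul, one_mul, Real.sin_add]
    have a1 := abs_add_le (Real.sin (k * t) * Real.cos t) (Real.cos (k * t) * Real.sin t)
    rw [abs_mul, abs_mul] at a1
    have c1 := Real.abs_cos_le_one t
    have c2 := Real.abs_cos_le_one (k * t)
    have := abs_nonneg (Real.sin t)
    have := abs_nonneg (Real.sin (k * t))
    nlinarith

lemma one_sub_cos_mul_le (k : ℕ) (t : ℝ) : 1 - Real.cos (k * t) ≤ k^2 * (1 - Real.cos t) := by
  have e1 : 1 - Real.cos (k * t) = 2 * |Real.sin (k * (t/2))|^2 := by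
    rw [sq_abs, Real.sin_sq_eq_half_sub, show 2 * ((k:ℝ) * (t/2)) = k * t by ring]; ring
  have e2 : 1 - Real.cos t = 2 * |Real.sin (t/2)|^2 := by
    rw [sq_abs, Real.sin_sq_eq_half_sub, show 2 * (t/2) = t by ring]; ring
  rw [e1, e2]
  have := abs_sin_mul_le k (t/2)
  have h : |Real.sin (k * (t/2))|^2 ≤ (k * |Real.sin (t/2)|)^2 := by gcongr
  nlinarith

lemma one_add_cos_mul_le (j : ℕ) (t : ℝ) :
    1 + Real.cos ((2 * j + 1 : ℕ) * t) ≤ ((2 * j + 1 : ℕ):ℝ)^2 * (1 + Real.cos t) := by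
  have := one_sub_cos_mul_le (2 * j + 1) (t + π)
  rw [Real.cos_add_pi] at this
  have e : (((2 * j + 1 : ℕ):ℝ)) * (t + π) = ((2 * j + 1 : ℕ):ℝ) * t + π + j * (2 * π) := by push_cast; ring
  rw [e, Real.cos_add_nat_mul_two_pi, Real.cos_add_pi] at this
  linarith

lemma g_caseA_pos {n e m : ℕ} (hme : m + e ≤ n) (hm : e + 2 ≤ m) (x : ℝ) (hx : 0 ≤ x) (hx1 : n * x ≤ 1) :
    8 * x^2 ≤ Real.cos (π * (e * x)) - Real.cos (π * (m * x)) := by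
  have hme' : (m:ℝ) + e ≤ n := by exact_mod_cast hme
  have hm' : (e:ℝ) + 2 ≤ m := by exact_mod_cast hm
  have he : (0:ℝ) ≤ e := by positivity
  rw [Real.cos_sub_cos]
  have p := Real.pi_pos
  have y1 : ((m:ℝ) + e) * x ≤ 1 := by nlinarith
  have y2 : ((m:ℝ) - e) * x ≤ 1 := by nlinarith
  have s1 := Real.mul_le_sin (x := π * (((m:ℝ) + e) * x) / 2) (by positivity) (by nlinarith)
  have hme0 : 0 ≤ (m:ℝ) - e := by linarith
  have s2 := Real.mul_le_sin (x := π * (((m:ℝ) - e) * x) / 2) (by positivity) (by nlinarith)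
  rw [show 2 / π * (π * (((m:ℝ) + e) * x) / 2) = (m + e) * x by field_simp] at s1
  rw [show 2 / π * (π * (((m:ℝ) - e) * x) / 2) = (m - e) * x by field_simp] at s2
  rw [show (π * ((e:ℝ) * x) + π * (m * x)) / 2 = π * (((m:ℝ) + e) * x) / 2 by ring,
    show (π * ((e:ℝ) * x) - π * (m * x)) / 2 = -(π * (((m:ℝ) - e) * x) / 2) by ring, Real.sin_neg]
  have t1 : 2 * x ≤ Real.sin (π * (((m:ℝ) + e) * x) / 2) := by nlinarith
  have t2 : 2 * x ≤ Real.sin (π * (((m:ℝ) - e) * x) / 2) := by nlinarith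
  have := mul_le_mul t1 t2 (by positivity) (by linarith)
  nlinarith

lemma g_caseA_neg {n e m : ℕ} (hme : m + e ≤ n) (hm : e ≤ m) (x : ℝ) (hx : 0 ≤ x) (hx1 : n * x ≤ 1) :
    2 * (1 - n * x)^2 ≤ Real.cos (π * (e * x)) + Real.cos (π * (m * x)) := by
  have hme' : (m:ℝ) + e ≤ n := by exact_mod_cast hme
  have hm' : (e:ℝ) ≤ m := by exact_mod_cast hm
  have he : (0:ℝ) ≤ e := by positivity
  rw [Real.cos_add_cos]
  have p := Real.pi_pos
  have y1 : ((m:ℝ) + e) * x ≤ n * x := by nlinarith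
  have y2 : ((m:ℝ) - e) * x ≤ n * x := by nlinarith
  have s1 := Real.one_sub_mul_le_cos (x := π * (((m:ℝ) + e) * x) / 2) (by positivity) (by nlinarith)
  have hme0 : 0 ≤ (m:ℝ) - e := by linarith
  have s2 := Real.one_sub_mul_le_cos (x := π * (((m:ℝ) - e) * x) / 2) (by positivity) (by nlinarith)
  rw [show 2 / π * (π * (((m:ℝ) + e) * x) / 2) = (m + e) * x by field_simp] at s1
  rw [show 2 / π * (π * (((m:ℝ) - e) * x) / 2) = (m - e) * x by field_simp] at s2
  rw [show (π * ((e:ℝ) * x) + π * (m * x)) / 2 = π * (((m:ℝ) + e) * x) / 2 by ring,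
    show (π * ((e:ℝ) * x) - π * (m * x)) / 2 = -(π * (((m:ℝ) - e) * x) / 2) by ring, Real.cos_neg]
  have t1 : 1 - n * x ≤ Real.cos (π * (((m:ℝ) + e) * x) / 2) := by linarith
  have t2 : 1 - n * x ≤ Real.cos (π * (((m:ℝ) - e) * x) / 2) := by linarith
  have := mul_le_mul t1 t2 (by linarith) (by linarith)
  nlinarith

lemma caseA {n e m : ℕ} (hn : 800 ≤ n) (hme : m + e ≤ n) {σ : ℝ}
    (hσ : (σ = 1 ∧ e + 2 ≤ m) ∨ (σ = -1 ∧ e ≤ m)) :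
    n * exp (0.117 * n + 24) ≤ ∫ x in (0:ℝ)..(1/n), S n x * (Real.cos (π * (e * x)) - σ * Real.cos (π * (m * x))) := by
  have hnR : (800:ℝ) ≤ n := by exact_mod_cast hn
  have hn0 : (0:ℝ) < n := by linarith
  have hnum := num_main hn
  have hc : Continuous (fun x => S n x * (Real.cos (π * (e * x)) - σ * Real.cos (π * (m * x)))) := by
    have := S_cont n
    fun_prop
  obtain ⟨p, hp⟩ : ∃ p : ℝ, p = (n:ℝ) + 1/2 := ⟨_, rfl⟩
  have hp0 : 0 < p := by linarith
  have hg0 : ∀ x : ℝ, 0 ≤ x → n * x ≤ 1 → 0 ≤ Real.cos (π * (e * x)) - σ * Real.cos (π * (m * x)) := by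
    intro x hx hx1
    rcases hσ with ⟨rfl, h⟩ | ⟨rfl, h⟩
    · have := g_caseA_pos hme h x hx hx1
      nlinarith [sq_nonneg x]
    · have := g_caseA_neg hme h x hx hx1
      nlinarith [sq_nonneg (1 - n * x)]
  have hgJ : ∀ x : ℝ, 3/4 ≤ p * x → p * x ≤ 5/6 → 4.5 / p^2 ≤ Real.cos (π * (e * x)) - σ * Real.cos (π * (m * x)) := by
    intro x hx1 hx2
    have hx : 0 ≤ x := by
      by_contra h
      push Not at h
      nlinarith
    have hnx : n * x ≤ 5/6 := by nlinarith
    rw [div_le_iff₀ (by positivity)]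
    rcases hσ with ⟨rfl, h⟩ | ⟨rfl, h⟩
    · have := g_caseA_pos hme h x hx (by linarith)
      have h2 : (3/4:ℝ)^2 ≤ (p * x)^2 := by gcongr
      have h3 : 8 * x^2 * p^2 ≤ (Real.cos (π * (e * x)) - 1 * Real.cos (π * (m * x))) * p^2 := by
        gcongr; linarith
      nlinarith
    · have := g_caseA_neg hme h x hx (by linarith)
      have h2 : (1/6:ℝ)^2 ≤ (1 - n * x)^2 := by
        apply pow_le_pow_left₀ (by norm_num); linarith
      have h3 : 1/18 * p^2 ≤ (Real.cos (π * (e * x)) - (-1) * Real.cos (π * (m * x))) * p^2 := by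
        gcongr; linarith
      nlinarith
  have hJ := J_lower (n := n) (by omega) hc
    (fun x hx hx1 => mul_nonneg (S_nonneg hx hx1) (hg0 x hx hx1))
    (exp (0.189 * ((n:ℝ) + 1/2)) * (4.5 / p^2)) (by
      intro x hx1 hx2
      apply mul_le_mul (S_lower (by omega) hx1 hx2) (hgJ x (by rw [hp]; exact hx1) (by rw [hp]; exact hx2)) (by positivity)
      exact (Real.exp_pos _).le.trans (S_lower (by omega) hx1 hx2))
  refine le_trans ?_ hJ
  rw [← hp] at hnum ⊢
  rw [le_div_iff₀ (by positivity), mul_div_assoc', le_div_iff₀ (by positivity)]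
  have : 0 ≤ p^3 * (n * exp (0.117 * n + 24)) := by positivity
  nlinarith

set_option maxHeartbeats 800000 in
lemma caseB {n e m : ℕ} (hn : 800 ≤ n) (he : e ≤ 1) (hmn : n ≤ m) {σ : ℝ}
    (hσ : σ = 1 ∨ σ = -1) :
    n * exp (0.117 * n + 24) ≤ ∫ x in (0:ℝ)..(1/n), S n x * (Real.cos (π * (e * x)) - σ * Real.cos (π * (m * x))) := by
  have hnR : (800:ℝ) ≤ n := by exact_mod_cast hn
  have hmR : (n:ℝ) ≤ m := by exact_mod_cast hmn
  have hn0 : (0:ℝ) < n := by linarith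
  have hnum := num_main hn
  obtain ⟨x₀, h1, h2, hm, -⟩ := exists_peak hn
  have hF := F_lower hn h1 h2 hm
  have hcS := S_cont n
  obtain ⟨F, hFd⟩ : ∃ F : ℝ, F = ∫ x in (0:ℝ)..(1/n), S n x := ⟨_, rfl⟩
  have hFJ := J_lower (n := n) (by omega) (S_cont n) (fun x hx hx1 => S_nonneg hx hx1)
    (exp (0.189 * ((n:ℝ) + 1/2))) (fun x hx1 hx2 => S_lower (by omega) hx1 hx2)
  rw [← hFd] at hF hFJ
  have hF0 : 0 < F := lt_of_lt_of_le (by positivity) hFJ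
  obtain ⟨j, hj⟩ : ∃ j : ℕ, j = (3 * n - 10) / 20 := ⟨_, rfl⟩
  obtain ⟨k, hk⟩ : ∃ k : ℕ, k = 2 * j + 1 := ⟨_, rfl⟩
  have hk1 : 10 * k ≤ 3 * n := by omega
  have hk2 : 3 * n ≤ 10 * k + 20 := by omega
  have hk1R : 10 * (k:ℝ) ≤ 3 * n := by exact_mod_cast hk1
  have hk2R : 3 * (n:ℝ) ≤ 10 * k + 20 := by exact_mod_cast hk2
  have hk0 : (0:ℝ) < k := by linarith
  have hm0R : (0:ℝ) < m := by linarith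
  have hpt : ∀ t : ℝ, 1 - σ * Real.cos (k * t) ≤ k^2 * (1 - σ * Real.cos t) := by
    intro t
    rcases hσ with rfl | rfl
    · have := one_sub_cos_mul_le k t
      linarith
    · have := one_add_cos_mul_le j t
      rw [← hk] at this
      linarith
  have hS0 : ∀ x ∈ Set.Icc (0:ℝ) (1/n), 0 ≤ S n x := by
    intro x hx
    apply S_nonneg hx.1
    have := hx.2
    rw [le_div_iff₀ hn0] at this
    linarith
  have h1n : (0:ℝ) ≤ 1 / n := by positivity
  have hA : ∫ x in (0:ℝ)..(1/n), (S n x - σ * (S n x * Real.cos ((π * (k * m)) * x))) ≤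
      ∫ x in (0:ℝ)..(1/n), k^2 * (S n x * (1 - σ * Real.cos (π * (m * x)))) := by
    apply intervalIntegral.integral_mono_on h1n (Continuous.intervalIntegrable (by fun_prop) _ _)
      (Continuous.intervalIntegrable (by fun_prop) _ _)
    intro x hx
    have := mul_le_mul_of_nonneg_left (hpt (π * (m * x))) (hS0 x hx)
    rw [show (k:ℝ) * (π * (m * x)) = π * (k * m) * x by ring] at this
    linarith
  rw [intervalIntegral.integral_sub (Continuous.intervalIntegrable (by fun_prop) _ _)
    (Continuous.intervalIntegrable (by fun_prop) _ _), intervalIntegral.integral_const_mul,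
    intervalIntegral.integral_const_mul, ← hFd] at hA
  have hosc := osc hn h1 h2 hm (m := π * (k * m)) (by positivity)
  have hS00 : 0 ≤ S n x₀ := by
    have := hF0.le
    have h0 := hm 0 (le_refl _) (by simp)
    rw [S_zero (by omega)] at h0
    exact h0
  have hosc2 : 2 * S n x₀ / (π * (k * m)) ≤ F / 2 := by
    rw [div_le_iff₀ (by positivity)]
    rw [div_mul_eq_mul_div, div_le_iff₀ (by positivity)] at hF
    have q1 : 0.9 * (n:ℝ)^2 ≤ π * (k * m) := by
      have a1 : 0.2975 * (n:ℝ) ≤ k := by linarith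
      have a2 : 0.2975 * (n:ℝ) * n ≤ k * m := by gcongr
      have a3 : (3.1:ℝ) ≤ π := by linarith [Real.pi_gt_d2]
      have a4 : 3.1 * (0.2975 * (n:ℝ) * n) ≤ π * (k * m) := by gcongr
      nlinarith
    nlinarith
  have hB : 0 ≤ F / 2 - σ * ∫ x in (0:ℝ)..(1/n), S n x * Real.cos ((π * (k * m)) * x) := by
    have := abs_le.1 (hosc.trans hosc2)
    rcases hσ with rfl | rfl
    · linarith [this.2]
    · linarith [this.1]
  obtain ⟨I, hI⟩ : ∃ I : ℝ, I = ∫ x in (0:ℝ)..(1/n), S n x * (1 - σ * Real.cos (π * (m * x))) := ⟨_, rfl⟩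
  rw [← hI] at hA
  have hC : F / 2 ≤ k^2 * I := by linarith
  have hk9 : (k:ℝ)^2 ≤ 0.09 * n^2 := by nlinarith
  have hI0 : 0 ≤ I := by
    by_contra h
    push Not at h
    have : (k:ℝ)^2 * I < 0 := mul_neg_of_pos_of_neg (by positivity) h
    linarith
  have hD : 5.55 * F ≤ n^2 * I := by
    have : (k:ℝ)^2 * I ≤ 0.09 * n^2 * I := by gcongr
    linarith
  have hE : ∫ x in (0:ℝ)..(1/n), (S n x * (1 - σ * Real.cos (π * (m * x))) - 4.95 / n^2 * S n x) ≤
      ∫ x in (0:ℝ)..(1/n), S n x * (Real.cos (π * (e * x)) - σ * Real.cos (π * (m * x))) := by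
    apply intervalIntegral.integral_mono_on h1n (Continuous.intervalIntegrable (by fun_prop) _ _)
      (Continuous.intervalIntegrable (by fun_prop) _ _)
    intro x hx
    have h0 := hS0 x hx
    have c1 := Real.one_sub_sq_div_two_le_cos (x := π * (e * x))
    have c2 : 1 - 4.95 / (n:ℝ)^2 ≤ Real.cos (π * (e * x)) := by
      refine le_trans ?_ c1
      have he' : (e:ℝ) ≤ 1 := by exact_mod_cast he
      have hx0 := hx.1
      have hx1 := hx.2
      have b1 : (e:ℝ) * x ≤ 1 * (1 / n) := by gcongr
      have b2 : (π * (e * x))^2 ≤ (3.145 * (1 * (1/(n:ℝ))))^2 := by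
        gcongr
        linarith [Real.pi_lt_d2, Real.pi_lt_d4]
      have b3 : (3.145 * (1 * (1/(n:ℝ))))^2 = 3.145^2 / n^2 := by field_simp
      have b4 : 4.95 / (n:ℝ)^2 = 9.9 / n^2 / 2 := by ring
      have b5 : (3.145:ℝ)^2 / n^2 ≤ 9.9 / n^2 := by gcongr; norm_num
      rw [b4]
      linarith
    nlinarith
  rw [intervalIntegral.integral_sub (Continuous.intervalIntegrable (by fun_prop) _ _)
    (Continuous.intervalIntegrable (by fun_prop) _ _), intervalIntegral.integral_const_mul, ← hFd, ← hI] at hE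
  refine le_trans ?_ hE
  have hG : 0.6 * F / n^2 ≤ I - 4.95 / n^2 * F := by
    rw [div_le_iff₀ (by positivity), sub_mul, div_mul_eq_mul_div, div_mul_cancel₀ _ (by positivity)]
    linarith
  refine le_trans ?_ hG
  rw [le_div_iff₀ (by positivity)]
  rw [div_le_iff₀ (by positivity)] at hFJ
  obtain ⟨p, hp⟩ : ∃ p : ℝ, p = (n:ℝ) + 1/2 := ⟨_, rfl⟩
  rw [← hp] at hnum hFJ
  have hp0 : 0 < p := by linarith
  obtain ⟨R, hR⟩ : ∃ R : ℝ, R = n * exp (0.117 * n + 24) := ⟨_, rfl⟩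
  have hR0 : 0 < R := by rw [hR]; positivity
  rw [← hR]
  have q1 : 20 * p^3 * R ≤ F * (12 * p) := by
    rw [hR]
    refine le_trans (le_of_eq (by ring)) (hnum.trans hFJ)
  have q2 : 20 * p^2 * R ≤ 12 * F := by
    refine le_of_mul_le_mul_right ?_ hp0
    linarith
  have q3 : R * n^2 ≤ R * p^2 := by
    have : (n:ℝ) ≤ p := by linarith
    gcongr
  linarith

lemma main_ineq {n e m : ℕ} (hn : 800 ≤ n) (he : e ≤ 1) {σ : ℝ}
    (hσ : (σ = 1 ∧ e + 2 ≤ m) ∨ (σ = -1 ∧ e ≤ m)) :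
    0 ≤ ∫ x in (0:ℝ)..(1/2), S n x * (Real.cos (π * (e * x)) - σ * Real.cos (π * (m * x))) := by
  have hnR : (800:ℝ) ≤ n := by exact_mod_cast hn
  have hn0 : (0:ℝ) < n := by linarith
  have hcS := S_cont n
  have hc : Continuous (fun x => S n x * (Real.cos (π * (e * x)) - σ * Real.cos (π * (m * x)))) := by
    fun_prop
  have h1 : n * exp (0.117 * n + 24) ≤ ∫ x in (0:ℝ)..(1/n), S n x * (Real.cos (π * (e * x)) - σ * Real.cos (π * (m * x))) := by
    rcases Nat.lt_or_ge m n with h | h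
    · exact caseA hn (by omega) hσ
    · apply caseB hn he h
      rcases hσ with h | h
      · exact Or.inl h.1
      · exact Or.inr h.1
  rw [← intervalIntegral.integral_add_adjacent_intervals (b := 1/(n:ℝ)) (hc.intervalIntegrable _ _) (hc.intervalIntegrable _ _)]
  have hle : 1 / (n:ℝ) ≤ 1/2 := by
    rw [div_le_div_iff₀ hn0 (by norm_num)]; linarith
  have h2 := intervalIntegral.norm_integral_le_of_norm_le_const (a := 1/(n:ℝ)) (b := 1/2)
    (f := fun x => S n x * (Real.cos (π * (e * x)) - σ * Real.cos (π * (m * x))))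
    (C := n * exp (0.117 * n + 24) * 2) (by
      intro x hx
      rw [Set.uIoc_of_le hle] at hx
      rw [norm_mul]
      apply mul_le_mul (S_bound n hn x hx.1.le hx.2) _ (norm_nonneg _) (by positivity)
      have c1 := abs_le.1 (Real.abs_cos_le_one (π * (e * x)))
      have c2 := abs_le.1 (Real.abs_cos_le_one (π * (m * x)))
      rw [Real.norm_eq_abs, abs_le]
      rcases hσ with h | h
      · rw [h.1]; constructor <;> linarith [c1.1, c1.2, c2.1, c2.2]
      · rw [h.1]; constructor <;> linarith [c1.1, c1.2, c2.1, c2.2])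
  rw [Real.norm_eq_abs] at h2
  have h3 := (abs_le.1 h2).1
  have h4 : |1/2 - 1/(n:ℝ)| ≤ 1/2 := by
    rw [abs_of_nonneg (by linarith)]
    have : 0 ≤ 1 / (n:ℝ) := by positivity
    linarith
  have h5 : n * exp (0.117 * n + 24) * 2 * |1/2 - 1/(n:ℝ)| ≤ n * exp (0.117 * n + 24) * 2 * (1/2) := by gcongr
  linarith
end QP

namespace QP
open Real MeasureTheory

lemma int_exp (m : ℤ) : ∫ x in (0:ℝ)..1, Complex.exp (2 * π * Complex.I * m * x) = if m = 0 then 1 else 0 := by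
  split_ifs with h
  · subst h; simp
  · have hc : (2 * π * Complex.I * m : ℂ) ≠ 0 := by
      have : (m:ℂ) ≠ 0 := by exact_mod_cast h
      have hp : (π:ℂ) ≠ 0 := by exact_mod_cast Real.pi_ne_zero
      simp [this, hp]
    rw [integral_exp_mul_complex hc]
    have : Complex.exp (2 * π * Complex.I * m * (1:ℝ)) = 1 := by
      rw [Complex.exp_eq_one_iff]
      exact ⟨m, by push_cast; ring⟩
    rw [this]
    simp

lemma coeff_int (p : Polynomial ℤ) (j : ℕ) :
    (p.coeff j : ℂ) = ∫ x in (0:ℝ)..1, (Polynomial.aeval (Complex.exp (2 * π * Complex.I * x)) p)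
      * Complex.exp (-(2 * π * Complex.I * j * x)) := by
  have h : ∀ x : ℝ, (Polynomial.aeval (Complex.exp (2 * π * Complex.I * x)) p)
      * Complex.exp (-(2 * π * Complex.I * j * x)) = ∑ i ∈ Finset.range (p.natDegree + 1 + j + 1),
        (p.coeff i : ℂ) * Complex.exp (2 * π * Complex.I * ((i:ℤ) - (j:ℤ) : ℤ) * x) := by
    intro x
    rw [Polynomial.aeval_eq_sum_range' (n := p.natDegree + 1 + j + 1) (by omega), Finset.sum_mul]
    apply Finset.sum_congr rfl
    intro i _
    rw [zsmul_eq_mul, mul_assoc, ← Complex.exp_nat_mul, ← Complex.exp_add]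
    congr 2
    push_cast
    ring
  simp_rw [h]
  rw [intervalIntegral.integral_finsetSum (by
    intro i _
    apply Continuous.intervalIntegrable
    fun_prop)]
  simp_rw [intervalIntegral.integral_const_mul, int_exp]
  rw [Finset.sum_eq_single j]
  · simp
  · intro i _ hij
    rw [if_neg (by omega)]
    simp
  · intro h
    simp at h

lemma one_sub_exp (z : ℂ) : 1 - Complex.exp (2 * z * Complex.I) = -Complex.I * (2 * Complex.sin z) * Complex.exp (z * Complex.I) := by
  unfold Complex.sin
  have h1 : Complex.exp (-z * Complex.I) * Complex.exp (z * Complex.I) = 1 := by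
    rw [← Complex.exp_add]; simp
  have h2 : Complex.exp (2 * z * Complex.I) = Complex.exp (z * Complex.I) * Complex.exp (z * Complex.I) := by
    rw [← Complex.exp_add]; congr 1; ring
  rw [h2]
  linear_combination (-1) * h1 + (Complex.exp (-z * Complex.I) - Complex.exp (z * Complex.I)) * Complex.exp (z * Complex.I) * Complex.I_sq

lemma sum_succ (n : ℕ) : ∑ k ∈ Finset.range n, ((k:ℂ) + 1) = n * (n + 1) / 2 := by
  induction n with
  | zero => simp
  | succ n ih => rw [Finset.sum_range_succ, ih]; push_cast; ring

lemma aeval_P (n : ℕ) (x : ℝ) :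
    Polynomial.aeval (Complex.exp (2 * π * Complex.I * x)) (∏ k ∈ Finset.Icc 1 n, (1 - (Polynomial.X : Polynomial ℤ) ^ k))
      = (-Complex.I)^n * (S n x : ℂ) * Complex.exp (π * Complex.I * (n * (n + 1) / 2) * x) := by
  have hI : Finset.Icc 1 n = Finset.Ico 1 (n + 1) := by ext; simp
  rw [map_prod, hI, Finset.prod_Ico_eq_prod_range]
  have h : ∀ k ∈ Finset.range (n + 1 - 1), Polynomial.aeval (Complex.exp (2 * π * Complex.I * x)) (1 - (Polynomial.X : Polynomial ℤ) ^ (1 + k))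
      = (-Complex.I) * ((2 * Real.sin (π * (((k:ℝ)+1) * x)) : ℝ) : ℂ) * Complex.exp (((k:ℂ) + 1) * (π * Complex.I * x)) := by
    intro k _
    rw [map_sub, map_one, map_pow, Polynomial.aeval_X, ← Complex.exp_nat_mul]
    have := one_sub_exp (π * (((k:ℝ)+1) * x) : ℝ)
    push_cast at this ⊢
    convert this using 2
    · congr 1; ring
    · congr 1; ring
  rw [Finset.prod_congr rfl h, Finset.prod_mul_distrib, Finset.prod_mul_distrib, Finset.prod_const,
    Finset.card_range, ← Complex.exp_sum, ← Finset.sum_mul, sum_succ]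
  simp only [Nat.add_sub_cancel]
  unfold S
  rw [Complex.ofReal_prod]
  congr 2
  ring

lemma fourier (h j : ℕ) : (a (2 * h) j : ℝ) = (-1)^h * ∫ x in (0:ℝ)..1, S (2 * h) x *
    Real.cos (π * (((h:ℝ) * (2 * h + 1) - 2 * j) * x)) := by
  have h1 := coeff_int (∏ k ∈ Finset.Icc 1 (2 * h), (1 - (Polynomial.X : Polynomial ℤ) ^ k)) j
  simp_rw [aeval_P] at h1
  have h2 : ∀ x : ℝ, (-Complex.I)^(2 * h) * (S (2 * h) x : ℂ) * Complex.exp (π * Complex.I * (((2 * h : ℕ):ℂ) * ((2 * h : ℕ) + 1) / 2) * x) * Complex.exp (-(2 * π * Complex.I * j * x))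
      = (((-1)^h * S (2 * h) x : ℝ) : ℂ) * Complex.exp ((π * (((h:ℝ) * (2 * h + 1) - 2 * j) * x) : ℝ) * Complex.I) := by
    intro x
    rw [pow_mul, neg_sq, Complex.I_sq, mul_assoc, ← Complex.exp_add]
    push_cast
    congr 2
    ring
  simp_rw [h2] at h1
  have h3 := congrArg Complex.re h1
  have hcS := S_cont (2 * h)
  have hIntg : IntervalIntegrable (fun x : ℝ => (((-1)^h * S (2 * h) x : ℝ) : ℂ) * Complex.exp ((π * (((h:ℝ) * (2 * h + 1) - 2 * j) * x) : ℝ) * Complex.I)) volume 0 1 := by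
    apply Continuous.intervalIntegrable
    fun_prop
  have h4 := Complex.reCLM.intervalIntegral_comp_comm hIntg
  simp only [Complex.reCLM_apply] at h4
  rw [← h4] at h3
  simp only [Complex.re_ofReal_mul, Complex.exp_ofReal_mul_I_re, Complex.intCast_re] at h3
  unfold a
  rw [h3, ← intervalIntegral.integral_const_mul]
  congr 1
  ext x
  ring

lemma S_refl (n : ℕ) (x : ℝ) : S n (1 - x) = (∏ k ∈ Finset.range n, (-1:ℝ)^k) * S n x := by
  unfold S
  rw [← Finset.prod_mul_distrib]
  apply Finset.prod_congr rfl
  intro k _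
  have : π * (((k:ℝ)+1) * (1 - x)) = (((k+1 : ℕ):ℝ)) * π - π * (((k:ℝ)+1) * x) := by push_cast; ring
  rw [this, Real.sin_nat_mul_pi_sub]
  ring

lemma prod_neg_one (h : ℕ) : ∏ k ∈ Finset.range (2 * h), (-1:ℝ)^k = (-1)^h := by
  induction h with
  | zero => simp
  | succ h ih =>
    rw [show 2 * (h + 1) = 2 * h + 1 + 1 by ring, Finset.prod_range_succ, Finset.prod_range_succ, ih]
    rw [pow_succ (-1:ℝ) (2 * h), pow_mul, pow_succ (-1:ℝ) h]
    norm_num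

lemma fourier_half (h j : ℕ) : (a (2 * h) j : ℝ) = (-1)^h * (2 * ∫ x in (0:ℝ)..(1/2), S (2 * h) x *
    Real.cos (π * (((((h:ℤ) * (2 * h + 1) - 2 * j).natAbs : ℕ) : ℝ) * x))) := by
  rw [fourier]
  congr 1
  have e0 : ∀ x : ℝ, Real.cos (π * (((((h:ℤ) * (2 * h + 1) - 2 * j).natAbs : ℕ) : ℝ) * x)) = Real.cos (π * (((h:ℝ) * (2 * h + 1) - 2 * j) * x)) := by
    intro x
    rw [Nat.cast_natAbs]
    push_cast
    rcases abs_choice ((h:ℝ) * (2 * h + 1) - 2 * j) with h | h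
    · rw [h]
    · rw [h, neg_mul, mul_neg, Real.cos_neg]
  simp_rw [e0]
  have hcS := S_cont (2 * h)
  have hc : Continuous (fun x => S (2 * h) x * Real.cos (π * (((h:ℝ) * (2 * h + 1) - 2 * j) * x))) := by fun_prop
  rw [← intervalIntegral.integral_add_adjacent_intervals (b := 1/2) (hc.intervalIntegrable _ _) (hc.intervalIntegrable _ _)]
  have h2 : ∫ x in (1/2:ℝ)..1, S (2 * h) x * Real.cos (π * (((h:ℝ) * (2 * h + 1) - 2 * j) * x)) =
      ∫ x in (0:ℝ)..(1/2), S (2 * h) x * Real.cos (π * (((h:ℝ) * (2 * h + 1) - 2 * j) * x)) := by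
    have := intervalIntegral.integral_comp_sub_left (a := 0) (b := 1/2) (fun x => S (2 * h) x * Real.cos (π * (((h:ℝ) * (2 * h + 1) - 2 * j) * x))) 1
    rw [show (1:ℝ) - 1/2 = 1/2 by norm_num, sub_zero] at this
    rw [← this]
    congr 1
    ext x
    rw [S_refl, prod_neg_one]
    have e1 : π * (((h:ℝ) * (2 * h + 1) - 2 * j) * (1 - x)) = (((h:ℤ) * (2 * h + 1) - 2 * j : ℤ) : ℝ) * π - π * (((h:ℝ) * (2 * h + 1) - 2 * j) * x) := by
      push_cast; ring
    rw [e1, Real.cos_int_mul_pi_sub]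
    have e2 : (-1:ℝ)^((h:ℤ) * (2 * h + 1) - 2 * j : ℤ) = (-1)^h := by
      rw [show ((h:ℤ) * (2 * h + 1) - 2 * j : ℤ) = (h:ℤ) + 2 * ((h:ℤ)*h - j) by ring, zpow_add₀ (by norm_num), zpow_mul]
      norm_num
    rw [e2]
    have e3 : (-1:ℝ)^h * (-1)^h = 1 := by rw [← mul_pow]; norm_num
    linear_combination S (2 * h) x * Real.cos (π * (((h:ℝ) * (2 * h + 1) - 2 * j) * x)) * e3
  rw [h2]
  ring

lemma big {h : ℕ} (hn : 800 ≤ 2 * h) (j : ℕ) :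
    |a (2 * h) j| ≤ (-1)^h * a (2 * h) (2 * h * (2 * h + 1) / 4) := by
  obtain ⟨c, hc⟩ : ∃ c, c = 2 * h * (2 * h + 1) / 4 := ⟨_, rfl⟩
  obtain ⟨e, he⟩ : ∃ e, e = ((h:ℤ) * (2 * h + 1) - 2 * c).natAbs := ⟨_, rfl⟩
  obtain ⟨m, hm⟩ : ∃ m, m = ((h:ℤ) * (2 * h + 1) - 2 * j).natAbs := ⟨_, rfl⟩
  obtain ⟨q, hq⟩ : ∃ q, q = h * (2 * h + 1) := ⟨_, rfl⟩
  have hc' : c = q / 2 := by rw [hc, hq, mul_assoc]; omega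
  have hqz : (h:ℤ) * (2 * h + 1) = q := by rw [hq]; push_cast; ring
  rw [hqz] at he hm
  have he1 : e ≤ 1 := by omega
  have hme : m = e ∨ e + 2 ≤ m := by omega
  have fc := fourier_half h c
  have fj := fourier_half h j
  rw [hqz] at fc fj
  rw [← he] at fc
  rw [← hm] at fj
  rw [← hc]
  have hcS := S_cont (2 * h)
  obtain ⟨A, hA⟩ : ∃ A : ℝ, A = ∫ x in (0:ℝ)..(1/2), S (2 * h) x * Real.cos (π * ((e:ℝ) * x)) := ⟨_, rfl⟩
  obtain ⟨B, hB⟩ : ∃ B : ℝ, B = ∫ x in (0:ℝ)..(1/2), S (2 * h) x * Real.cos (π * ((m:ℝ) * x)) := ⟨_, rfl⟩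
  have key : ∀ σ : ℝ, ∫ x in (0:ℝ)..(1/2), S (2 * h) x * (Real.cos (π * (e * x)) - σ * Real.cos (π * (m * x))) = A - σ * B := by
    intro σ
    rw [hA, hB, ← intervalIntegral.integral_const_mul, ← intervalIntegral.integral_sub
      (Continuous.intervalIntegrable (by fun_prop) _ _) (Continuous.intervalIntegrable (by fun_prop) _ _)]
    congr 1
    ext x
    ring
  have k2 : -A ≤ B := by
    have := main_ineq hn he1 (m := m) (σ := -1) (Or.inr ⟨rfl, by omega⟩)
    rw [key] at this
    linarith
  have k1 : B ≤ A := by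
    rcases hme with h' | h'
    · rw [hA, hB, h']
    · have := main_ineq hn he1 (m := m) (σ := 1) (Or.inl ⟨rfl, h'⟩)
      rw [key] at this
      linarith
  rw [← hA] at fc
  rw [← hB] at fj
  have : ((|a (2 * h) j| : ℤ) : ℝ) ≤ (((-1)^h * a (2 * h) c : ℤ) : ℝ) := by
    push_cast
    rw [fc, fj, abs_mul, abs_pow, abs_neg, abs_one, one_pow, one_mul, ← mul_assoc, ← mul_pow]
    norm_num
    rw [abs_le]
    exact ⟨by linarith, k1⟩
  exact_mod_cast this
end QP

namespace QP

def frc (N : Nat) (f : Nat → Bool) : Bool :=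
  Nat.rec (motive := fun _ => Bool) false (fun m _ => f (Nat.succ m)) N

def tree (B : Nat) (fuel : Nat) : Nat → Nat → Nat :=
  Nat.rec (motive := fun _ => Nat → Nat → Nat)
    (fun lo _ => Nat.sub (Nat.shiftLeft 1 (Nat.mul B lo)) 1)
    (fun _ ih lo len => cond (Nat.ble len 1) (Nat.sub (Nat.shiftLeft 1 (Nat.mul B lo)) 1)
      (Nat.mul (ih lo (Nat.div len 2)) (ih (Nat.add lo (Nat.div len 2)) (Nat.sub len (Nat.div len 2))))) fuel

def chk (B O H rep n N : Nat) : Bool :=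
  frc (Nat.div (Nat.land (Nat.add N H) (Nat.shiftLeft (Nat.sub (Nat.pow 2 B) 1) (Nat.mul B (Nat.div (Nat.mul n (Nat.add n 1)) 4))))
    (Nat.shiftLeft 1 (Nat.mul B (Nat.div (Nat.mul n (Nat.add n 1)) 4)))) fun d =>
  frc (Nat.add (Nat.sub d O) (Nat.sub O d)) fun C =>
  frc (Nat.mul (Nat.add O C) rep) fun W =>
  and (Nat.ble (Nat.mul 16 C) O) (and (cond (Nat.beq (Nat.mod n 4) 0) (Nat.ble O d) (Nat.ble d O))
    (and (Nat.beq (Nat.land (Nat.add W N) H) H) (Nat.beq (Nat.land (Nat.sub W N) H) H)))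

def loop (B O H rep : Nat) (fuel : Nat) : Nat → Nat → Bool :=
  Nat.rec (motive := fun _ => Nat → Nat → Bool) (fun _ _ => true)
    (fun _ ih n N =>
      frc (Nat.sub (Nat.shiftLeft N (Nat.mul B (Nat.add n 1))) N) fun N1 =>
      frc (Nat.sub (Nat.shiftLeft N1 (Nat.mul B (Nat.add n 2))) N1) fun N2 =>
      frc (Nat.add n 2) fun n2 =>
      and (chk B O H rep n2 N2) (ih n2 N2)) fuel

def chunk (B n0 fuel : Nat) : Bool :=
  frc (Nat.add (Nat.div (Nat.mul (Nat.add n0 (Nat.mul 2 fuel)) (Nat.add (Nat.add n0 (Nat.mul 2 fuel)) 1)) 2) 1) fun L =>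
  frc (Nat.pow 2 (Nat.sub B 1)) fun O =>
  frc (Nat.div (Nat.sub (Nat.shiftLeft 1 (Nat.mul B L)) 1) (Nat.sub (Nat.pow 2 B) 1)) fun rep =>
  frc (Nat.mul O rep) fun H =>
  frc (tree B 10 1 n0) fun N => loop B O H rep fuel n0 N

end QP

namespace QP

lemma frc_true {N : Nat} {f : Nat → Bool} (h : frc N f = true) : f N = true := by
  cases N with
  | zero => exact absurd h (by simp [frc])
  | succ m => exact h

lemma tree_eq (B fuel : ℕ) : ∀ lo len : ℕ, 1 ≤ len → len ≤ 2^fuel →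
    tree B fuel lo len = ∏ k ∈ Finset.range len, ((2^B)^(lo + k) - 1) := by
  have base : ∀ lo : ℕ, Nat.sub (Nat.shiftLeft 1 (Nat.mul B lo)) 1 = ∏ k ∈ Finset.range 1, ((2^B)^(lo + k) - 1) := by
    intro lo
    have : Nat.shiftLeft 1 (Nat.mul B lo) = (2^B)^lo := by
      change 1 <<< (B * lo) = _
      rw [Nat.one_shiftLeft, pow_mul]
    rw [this]; simp
  induction fuel with
  | zero =>
    intro lo len h1 h2
    obtain rfl : len = 1 := by simp at h2; omega
    exact base lo
  | succ f ih =>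
    intro lo len h1 h2
    have e : tree B (f + 1) lo len = cond (Nat.ble len 1) (Nat.sub (Nat.shiftLeft 1 (Nat.mul B lo)) 1)
      ((tree B f lo (len / 2)) * (tree B f (lo + len / 2) (len - len / 2))) := rfl
    rw [e]
    by_cases hl : len ≤ 1
    · obtain rfl : len = 1 := by omega
      exact base lo
    · have : Nat.ble len 1 = false := by
        rw [Bool.eq_false_iff]; intro h; exact hl (Nat.le_of_ble_eq_true h)
      rw [this, cond_false, ih _ _ (by omega) (by omega), ih _ _ (by omega) (by omega)]
      conv_rhs => rw [show len = len / 2 + (len - len / 2) by omega, Finset.prod_range_add]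
      simp only [add_assoc]

/-- The packed value of the product. -/
def PN (X n : ℕ) : ℕ := ∏ k ∈ Finset.range n, (X^(k+1) - 1)

lemma PN_succ (X n : ℕ) : PN X (n+1) = PN X n * X^(n+1) - PN X n := by
  unfold PN
  rw [Finset.prod_range_succ, Nat.mul_sub, mul_one]

lemma a_succ (n i : ℕ) : a (n+1) i = a n i - (if n + 1 ≤ i then a n (i - (n+1)) else 0) := by
  unfold a
  rw [Finset.prod_Icc_succ_top (by omega), mul_sub, mul_one, Polynomial.coeff_sub, Polynomial.coeff_mul_X_pow']

lemma a_bound_succ {n : ℕ} {K : ℤ} (hK : ∀ i, |a n i| ≤ K) (i : ℕ) : |a (n+1) i| ≤ 2 * K := by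
  rw [a_succ]
  have h1 := abs_le.1 (hK i)
  have h0 : 0 ≤ K := (abs_nonneg _).trans (hK 0)
  split_ifs
  · have h2 := abs_le.1 (hK (i - (n+1)))
    rw [abs_le]; constructor <;> linarith [h1.1, h1.2, h2.1, h2.2]
  · rw [abs_le]; constructor <;> linarith [h1.1, h1.2]

lemma a_bound (n i : ℕ) : |a n i| ≤ 2^n := by
  induction n generalizing i with
  | zero =>
    simp [a, Polynomial.coeff_one]
    split_ifs <;> simp
  | succ n ih =>
    rw [pow_succ, mul_comm]
    exact a_bound_succ ih i

lemma a_natDegree (n : ℕ) : (∏ k ∈ Finset.Icc 1 n, (1 - (Polynomial.X : Polynomial ℤ) ^ k)).natDegree ≤ n * (n+1) / 2 := by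
  have e : n * (n+1) / 2 = ∑ k ∈ Finset.Icc 1 n, k := by
    have := Finset.sum_range_id_mul_two (n+1)
    have h2 : ∑ k ∈ Finset.range (n+1), k = ∑ k ∈ Finset.Icc 1 n, k := by
      rw [Finset.sum_range_succ', add_zero]
      have hI : Finset.Icc 1 n = Finset.Ico 1 (n + 1) := by ext; simp
      rw [hI, Finset.sum_Ico_eq_sum_range]
      simp [add_comm]
    rw [h2] at this
    rw [Nat.add_sub_cancel] at this
    rw [mul_comm n, ← this]; omega
  rw [e]
  refine (Polynomial.natDegree_prod_le _ _).trans (Finset.sum_le_sum ?_)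
  intro k _
  refine (Polynomial.natDegree_sub_le _ _).trans ?_
  simp

lemma a_zero_of_gt {n i : ℕ} (h : n * (n+1) / 2 < i) : a n i = 0 :=
  Polynomial.coeff_eq_zero_of_natDegree_lt (lt_of_le_of_lt (a_natDegree n) h)

lemma PN_eq (X h L : ℕ) (hX : 1 ≤ X) (hL : 2 * h * (2 * h + 1) / 2 < L) :
    (PN X (2 * h) : ℤ) = ∑ i ∈ Finset.range L, a (2 * h) i * (X:ℤ)^i := by
  have h1 : (∏ k ∈ Finset.Icc 1 (2*h), (1 - (Polynomial.X : Polynomial ℤ) ^ k)).eval (X:ℤ) = (PN X (2 * h) : ℤ) := by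
    have hI : Finset.Icc 1 (2*h) = Finset.Ico 1 (2*h + 1) := by ext; simp
    rw [Polynomial.eval_prod, hI, Finset.prod_Ico_eq_prod_range, Nat.add_sub_cancel]
    unfold PN
    rw [Nat.cast_prod]
    have : ∀ k ∈ Finset.range (2*h), Polynomial.eval (X:ℤ) (1 - (Polynomial.X : Polynomial ℤ)^(1+k)) = (-1) * (((X^(k+1) - 1 : ℕ)) : ℤ) := by
      intro k _
      rw [Nat.cast_sub (Nat.one_le_pow _ _ hX)]
      simp
      ring
    rw [Finset.prod_congr rfl this, Finset.prod_mul_distrib]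
    simp
  rw [← h1, Polynomial.eval_eq_sum_range' (lt_of_le_of_lt (a_natDegree _) hL)]
  rfl

lemma digit {X : ℕ} (hX : 0 < X) (L : ℕ) : ∀ (w : ℕ → ℕ), (∀ i, w i < X) → ∀ j < L,
    (∑ i ∈ Finset.range L, w i * X^i) / X^j % X = w j := by
  induction L with
  | zero => intro w _ j hj; omega
  | succ L ih =>
    intro w hw j hj
    rw [Finset.sum_range_succ', pow_zero, mul_one]
    have e : ∑ i ∈ Finset.range L, w (i+1) * X^(i+1) = X * ∑ i ∈ Finset.range L, w (i+1) * X^i := by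
      rw [Finset.mul_sum]
      apply Finset.sum_congr rfl
      intro i _; ring
    rw [e]
    cases j with
    | zero => simp [Nat.add_mod, Nat.mod_eq_of_lt (hw 0)]
    | succ j =>
      rw [pow_succ', ← Nat.div_div_eq_div_mul, Nat.mul_add_div hX, Nat.div_eq_of_lt (hw 0), add_zero]
      exact ih (fun i => w (i+1)) (fun i => hw _) j (by omega)

lemma land_digit {B L : ℕ} (hB : 1 ≤ B) {w : ℕ → ℕ} (hw : ∀ i, w i < 2^B) {W H : ℕ}
    (hW : W = ∑ i ∈ Finset.range L, w i * (2^B)^i) (hH : H = ∑ i ∈ Finset.range L, 2^(B-1) * (2^B)^i)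
    (hl : Nat.land W H = H) {j : ℕ} (hj : j < L) : 2^(B-1) ≤ w j := by
  have hO : 2^(B-1) < 2^B := Nat.pow_lt_pow_right (by norm_num) (by omega)
  have dW := digit (Nat.two_pow_pos B) L w hw j hj
  have dH := digit (Nat.two_pow_pos B) L (fun _ => 2^(B-1)) (fun _ => hO) j hj
  rw [← hW] at dW
  rw [← hH] at dH
  have tb : ∀ V : ℕ, (V / (2^B)^j % 2^B).testBit (B-1) = V.testBit (B * j + (B - 1)) := by
    intro V
    rw [Nat.testBit_mod_two_pow, ← pow_mul, Nat.testBit_div_two_pow]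
    simp [show B - 1 < B by omega, add_comm]
  have h1 : H.testBit (B * j + (B-1)) = true := by
    rw [← tb, dH, Nat.testBit_two_pow_self]
  have h2 : W.testBit (B * j + (B-1)) = true := by
    have : (W &&& H) = H := hl
    rw [← this, Nat.testBit_and] at h1
    simp at h1
    exact h1.1
  rw [← tb, dW] at h2
  exact Nat.ge_two_pow_of_testBit h2
end QP

namespace QP

/-- The center coefficient dominates, with the right sign. -/
def Good (h : ℕ) : Prop := ∀ j, |a (2 * h) j| ≤ (-1)^h * a (2 * h) (2 * h * (2 * h + 1) / 4)

lemma digit_land (X B s : ℕ) :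
    (X &&& ((2 ^ B - 1) <<< s)) / (1 <<< s) = X / 2 ^ s % 2 ^ B := by
  rw [Nat.one_shiftLeft, ← Nat.shiftRight_eq_div_pow, Nat.shiftRight_and_distrib,
    Nat.shiftLeft_shiftRight, Nat.and_two_pow_sub_one_eq_mod, Nat.shiftRight_eq_div_pow]

lemma chk_sound {B O H rep N h L : ℕ} (hB : 1 ≤ B) (hO : O = 2^(B-1))
    (hL : 2 * h * (2 * h + 1) / 2 < L) (hrep : rep = ∑ i ∈ Finset.range L, (2^B)^i) (hH : H = O * rep)
    (hN : N = PN (2^B) (2 * h)) (hap : ∀ i, 4 * |a (2 * h) i| ≤ (O:ℤ))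
    (hc : chk B O H rep (2 * h) N = true) : Good h ∧ ∀ i, 16 * |a (2 * h) i| ≤ (O:ℤ) := by
  have hOB : 2^B = 2 * O := by rw [hO, ← pow_succ']; congr 1; omega
  have hO0 : 0 < O := by rw [hO]; positivity
  have h1 := frc_true hc
  have h2 := frc_true h1
  have h3 := frc_true h2
  obtain ⟨c, hcd⟩ : ∃ c, c = 2 * h * (2 * h + 1) / 4 := ⟨_, rfl⟩
  obtain ⟨d, hd⟩ : ∃ d, d = (N + H) / (2^B)^c % 2^B := ⟨_, rfl⟩
  have hd' : Nat.div (Nat.land (Nat.add N H) (Nat.shiftLeft (Nat.sub (Nat.pow 2 B) 1) (Nat.mul B (Nat.div (Nat.mul (2*h) (Nat.add (2*h) 1)) 4))))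
    (Nat.shiftLeft 1 (Nat.mul B (Nat.div (Nat.mul (2*h) (Nat.add (2*h) 1)) 4))) = d := by
    change ((N + H) &&& ((2 ^ B - 1) <<< (B * (2 * h * (2 * h + 1) / 4)))) / (1 <<< (B * (2 * h * (2 * h + 1) / 4))) = d
    rw [digit_land, pow_mul, hd, hcd]
  rw [hd'] at h3
  obtain ⟨C, hC⟩ : ∃ C, C = (d - O) + (O - d) := ⟨_, rfl⟩
  have hC' : Nat.add (Nat.sub d O) (Nat.sub O d) = C := hC.symm
  rw [hC'] at h3
  rw [Bool.and_eq_true, Bool.and_eq_true, Bool.and_eq_true] at h3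
  obtain ⟨k1, k2, k3, k4⟩ := h3
  have k1' : 16 * C ≤ O := Nat.le_of_ble_eq_true k1
  have k3' : Nat.land ((O + C) * rep + N) H = H := Nat.eq_of_beq_eq_true k3
  have k4' : Nat.land ((O + C) * rep - N) H = H := Nat.eq_of_beq_eq_true k4
  have hNs := PN_eq (2^B) h L (Nat.one_le_two_pow) hL
  rw [← hN] at hNs
  have hab : ∀ i, -(O:ℤ) ≤ 4 * a (2*h) i ∧ 4 * a (2*h) i ≤ O := by
    intro i
    have := hap i
    have h5 := neg_abs_le (a (2*h) i)
    have h6 := le_abs_self (a (2*h) i)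
    constructor <;> linarith
  -- general digit expansions
  have hsum : ∀ (s t : ℤ) (w : ℕ → ℕ), (∀ i, (w i : ℤ) = t + s * a (2*h) i) →
      ((∑ i ∈ Finset.range L, w i * (2^B)^i : ℕ) : ℤ) = t * rep + s * N := by
    intro s t w hw
    rw [hNs, hrep]
    push_cast
    rw [Finset.mul_sum, Finset.mul_sum, ← Finset.sum_add_distrib]
    apply Finset.sum_congr rfl
    intro i _
    rw [hw i]; ring
  have hHs : H = ∑ i ∈ Finset.range L, 2^(B-1) * (2^B)^i := by
    rw [hH, hrep, hO, Finset.mul_sum]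
  have hcL : c < L := by
    rw [hcd]; refine lt_of_le_of_lt ?_ hL; omega
  -- the center digit
  have hac : (d:ℤ) = O + a (2*h) c := by
    have hw : ∀ i, (((O + a (2*h) i).toNat : ℕ) : ℤ) = O + 1 * a (2*h) i := by
      intro i
      rw [Int.toNat_of_nonneg (by linarith [(hab i).1, (hab i).2]), one_mul]
    have e := hsum 1 O (fun i => (O + a (2*h) i).toNat) hw
    have e2 : N + H = ∑ i ∈ Finset.range L, (O + a (2*h) i).toNat * (2^B)^i := by
      have : ((N + H : ℕ) : ℤ) = O * rep + 1 * N := by rw [hH]; push_cast; ring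
      rw [← e] at this
      exact_mod_cast this
    have := digit (Nat.two_pow_pos B) L (fun i => (O + a (2*h) i).toNat) (by
      intro i
      have := hw i
      have b := hab i
      show (O + a (2*h) i).toNat < 2^B
      omega) c hcL
    rw [← e2, ← hd] at this
    rw [this, hw, one_mul]
  have hCa : (C:ℤ) = |a (2*h) c| := by
    rcases abs_cases (a (2*h) c) with ⟨e, _⟩ | ⟨e, _⟩ <;> rw [e] <;> omega
  have hlo : ∀ i < L, -(C:ℤ) ≤ a (2*h) i := by
    intro i hi
    have hw : ∀ i, (((O + C + a (2*h) i).toNat : ℕ) : ℤ) = (O + C) + 1 * a (2*h) i := by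
      intro i
      have b := hab i
      omega
    have e := hsum 1 (O + C) (fun i => (O + C + a (2*h) i).toNat) hw
    have e2 : (O + C) * rep + N = ∑ i ∈ Finset.range L, (O + C + a (2*h) i).toNat * (2^B)^i := by
      have : (((O + C) * rep + N : ℕ) : ℤ) = (O + C) * rep + 1 * N := by push_cast; ring
      rw [← e] at this
      exact_mod_cast this
    have := land_digit hB (w := fun i => (O + C + a (2*h) i).toNat) (by
      intro i
      have := hw i
      have b := hab i
      show (O + C + a (2*h) i).toNat < 2^B
      omega) e2 hHs k3' hi
    rw [← hO] at this
    have h5 := hw i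
    omega
  have hhi : ∀ i < L, a (2*h) i ≤ (C:ℤ) := by
    intro i hi
    have hw : ∀ i, (((O + C - a (2*h) i).toNat : ℕ) : ℤ) = (O + C) + (-1) * a (2*h) i := by
      intro i
      have b := hab i
      omega
    have e := hsum (-1) (O + C) (fun i => (O + C - a (2*h) i).toNat) hw
    have e2 : (O + C) * rep - N = ∑ i ∈ Finset.range L, (O + C - a (2*h) i).toNat * (2^B)^i := by
      have h5 : (((O + C) * rep : ℕ) : ℤ) = ((∑ i ∈ Finset.range L, (O + C - a (2*h) i).toNat * (2^B)^i + N : ℕ) : ℤ) := by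
        rw [Nat.cast_add, e]; push_cast; ring
      have h6 : (O + C) * rep = ∑ i ∈ Finset.range L, (O + C - a (2*h) i).toNat * (2^B)^i + N := by exact_mod_cast h5
      rw [h6, Nat.add_sub_cancel]
    have := land_digit hB (w := fun i => (O + C - a (2*h) i).toNat) (by
      intro i
      have := hw i
      have b := hab i
      show (O + C - a (2*h) i).toNat < 2^B
      omega) e2 hHs k4' hi
    rw [← hO] at this
    have h5 := hw i
    omega
  have hall : ∀ i, |a (2*h) i| ≤ (C:ℤ) := by
    intro i
    rcases Nat.lt_or_ge i L with hi | hi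
    · exact abs_le.2 ⟨hlo i hi, hhi i hi⟩
    · rw [a_zero_of_gt (lt_of_lt_of_le hL hi)]; simp
  refine ⟨?_, fun i => ?_⟩
  · intro j
    rw [← hcd]
    refine (hall j).trans ?_
    rw [hCa]
    rcases Nat.even_or_odd h with he | ho
    · have h4 : Nat.beq (Nat.mod (2*h) 4) 0 = true := by
        rw [Nat.beq_eq]
        obtain ⟨r, hr⟩ := he
        change (2*h) % 4 = 0
        omega
      rw [h4, cond_true] at k2
      have := Nat.le_of_ble_eq_true k2
      rw [he.neg_one_pow, one_mul, abs_of_nonneg]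
      omega
    · have h4 : Nat.beq (Nat.mod (2*h) 4) 0 = false := by
        rw [Bool.eq_false_iff]
        intro h5
        have h5' : (2*h) % 4 = 0 := Nat.eq_of_beq_eq_true h5
        obtain ⟨r, hr⟩ := ho
        omega
      rw [h4, cond_false] at k2
      have := Nat.le_of_ble_eq_true k2
      rw [ho.neg_one_pow, abs_of_nonpos]
      · ring_nf; rfl
      · omega
  · have := hall i
    have : ((16 * C : ℕ):ℤ) ≤ O := by exact_mod_cast k1'
    push_cast at this
    linarith

lemma loop_sound {B O H rep L : ℕ} (hB : 1 ≤ B) (hO : O = 2^(B-1))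
    (hrep : rep = ∑ i ∈ Finset.range L, (2^B)^i) (hH : H = O * rep) (fuel : ℕ) :
    ∀ (h N : ℕ), 2 * (h + fuel) * (2 * (h + fuel) + 1) / 2 < L → N = PN (2^B) (2 * h) →
    (∀ i, 16 * |a (2 * h) i| ≤ (O:ℤ)) → loop B O H rep fuel (2 * h) N = true →
    (∀ g, h < g → g ≤ h + fuel → Good g) ∧ ∀ i, 16 * |a (2 * (h + fuel)) i| ≤ (O:ℤ) := by
  induction fuel with
  | zero =>
    intro h N _ _ hap _
    exact ⟨fun g h1 h2 => by omega, hap⟩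
  | succ f ih =>
    intro h N hL hN hap hl
    have hl2 : (frc (Nat.sub (Nat.shiftLeft N (Nat.mul B (Nat.add (2*h) 1))) N) fun N1 =>
      frc (Nat.sub (Nat.shiftLeft N1 (Nat.mul B (Nat.add (2*h) 2))) N1) fun N2 =>
      frc (Nat.add (2*h) 2) fun n2 =>
      and (chk B O H rep n2 N2) (loop B O H rep f n2 N2)) = true := hl
    have l1 := frc_true hl2
    have l2 := frc_true l1
    have l3 := frc_true l2
    have e1 : Nat.sub (Nat.shiftLeft N (Nat.mul B (Nat.add (2*h) 1))) N = PN (2^B) (2*h+1) := by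
      change (N <<< (B * (2*h+1))) - N = _
      rw [Nat.shiftLeft_eq, pow_mul, PN_succ, hN]
    rw [e1] at l3
    have e2 : Nat.sub (Nat.shiftLeft (PN (2^B) (2*h+1)) (Nat.mul B (Nat.add (2*h) 2))) (PN (2^B) (2*h+1)) = PN (2^B) (2*(h+1)) := by
      change ((PN (2^B) (2*h+1)) <<< (B * (2*h+2))) - _ = _
      rw [Nat.shiftLeft_eq, pow_mul, show 2 * (h+1) = 2*h+1+1 by ring, PN_succ _ (2*h+1)]
    rw [e2] at l3
    have e3 : Nat.add (2*h) 2 = 2 * (h+1) := rfl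
    rw [e3] at l3
    rw [Bool.and_eq_true] at l3
    obtain ⟨m1, m2⟩ := l3
    have hap4 : ∀ i, 4 * |a (2*(h+1)) i| ≤ (O:ℤ) := by
      intro i
      have hK : ∀ i, |a (2*h) i| ≤ (O:ℤ) / 16 := by
        intro i
        have := hap i
        omega
      have := a_bound_succ (a_bound_succ hK) i
      rw [show 2*(h+1) = 2*h+1+1 by ring]
      omega
    have hLm : 2 * (h+1) * (2 * (h+1) + 1) / 2 < L := by
      refine lt_of_le_of_lt ?_ hL
      apply Nat.div_le_div_right
      apply Nat.mul_le_mul <;> omega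
    obtain ⟨g1, g2⟩ := chk_sound hB hO hLm hrep hH rfl hap4 m1
    have e4 : h + 1 + f = h + (f + 1) := by ring
    obtain ⟨i1, i2⟩ := ih (h+1) _ (by rw [e4]; exact hL) rfl g2 m2
    rw [e4] at i1 i2
    refine ⟨fun g h1 h2 => ?_, i2⟩
    rcases Nat.lt_or_ge (h+1) g with hg | hg
    · exact i1 g hg h2
    · obtain rfl : g = h + 1 := by omega
      exact g1

lemma chunk_sound {B h fuel : ℕ} (hB : 1 ≤ B) (h1 : 1 ≤ h) (h2 : h ≤ 512)
    (hap : ∀ i, 16 * |a (2 * h) i| ≤ (2:ℤ)^(B-1)) (hc : chunk B (2 * h) fuel = true) :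
    (∀ g, h < g → g ≤ h + fuel → Good g) ∧ ∀ i, 16 * |a (2 * (h + fuel)) i| ≤ (2:ℤ)^(B-1) := by
  have l1 := frc_true hc
  have l2 := frc_true l1
  have l3 := frc_true l2
  have l4 := frc_true l3
  have l5 := frc_true l4
  obtain ⟨L, hL⟩ : ∃ L, L = 2 * (h + fuel) * (2 * (h + fuel) + 1) / 2 + 1 := ⟨_, rfl⟩
  have eL : Nat.add (Nat.div (Nat.mul (Nat.add (2*h) (Nat.mul 2 fuel)) (Nat.add (Nat.add (2*h) (Nat.mul 2 fuel)) 1)) 2) 1 = L := by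
    change (2 * h + 2 * fuel) * (2 * h + 2 * fuel + 1) / 2 + 1 = L
    rw [hL, ← mul_add]
  rw [eL] at l5
  have hX : 2 ≤ 2^B := by
    calc 2 = 2^1 := rfl
      _ ≤ _ := Nat.pow_le_pow_right (by norm_num) hB
  have erep : Nat.div (Nat.sub (Nat.shiftLeft 1 (Nat.mul B L)) 1) (Nat.sub (Nat.pow 2 B) 1) = ∑ i ∈ Finset.range L, (2^B)^i := by
    rw [Nat.geomSum_eq hX]
    change (1 <<< (B * L) - 1) / (2^B - 1) = _
    rw [Nat.one_shiftLeft, pow_mul]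
  have et : tree B 10 1 (2 * h) = PN (2^B) (2*h) := by
    rw [tree_eq B 10 1 (2*h) (by omega) (by omega)]
    unfold PN
    simp only [add_comm]
  have hap' : ∀ i, 16 * |a (2 * h) i| ≤ ((Nat.pow 2 (Nat.sub B 1) : ℕ):ℤ) := by
    intro i
    have e : ((Nat.pow 2 (Nat.sub B 1) : ℕ):ℤ) = 2^(B-1) := by
      change ((2^(B-1) : ℕ):ℤ) = _
      push_cast; rfl
    rw [e]; exact hap i
  have := loop_sound hB rfl erep rfl fuel h _ (by rw [hL]; omega) et hap' l5
  refine ⟨this.1, fun i => ?_⟩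
  have e : ((Nat.pow 2 (Nat.sub B 1) : ℕ):ℤ) = 2^(B-1) := by
    change ((2^(B-1) : ℕ):ℤ) = _
    push_cast; rfl
  rw [← e]; exact this.2 i
end QP

namespace QP

theorem ck0 : chunk 85 (2 * 16) 133 = true := by decide +kernel
theorem ck1 : chunk 115 (2 * 149) 53 = true := by decide +kernel
theorem ck2 : chunk 134 (2 * 202) 34 = true := by decide +kernel
theorem ck3 : chunk 149 (2 * 236) 25 = true := by decide +kernel
theorem ck4 : chunk 160 (2 * 261) 20 = true := by decide +kernel
theorem ck5 : chunk 170 (2 * 281) 17 = true := by decide +kernel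
theorem ck6 : chunk 177 (2 * 298) 14 = true := by decide +kernel
theorem ck7 : chunk 185 (2 * 312) 13 = true := by decide +kernel
theorem ck8 : chunk 191 (2 * 325) 11 = true := by decide +kernel
theorem ck9 : chunk 197 (2 * 336) 10 = true := by decide +kernel
theorem ck10 : chunk 202 (2 * 346) 10 = true := by decide +kernel
theorem ck11 : chunk 208 (2 * 356) 9 = true := by decide +kernel
theorem ck12 : chunk 212 (2 * 365) 8 = true := by decide +kernel
theorem ck13 : chunk 217 (2 * 373) 8 = true := by decide +kernel
theorem ck14 : chunk 221 (2 * 381) 7 = true := by decide +kernel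
theorem ck15 : chunk 225 (2 * 388) 7 = true := by decide +kernel
theorem ck16 : chunk 227 (2 * 395) 4 = true := by decide +kernel

lemma ap_mono {h B C : ℕ} (hBC : B ≤ C) (hap : ∀ i, 16 * |a (2 * h) i| ≤ (2:ℤ)^(B-1)) :
    ∀ i, 16 * |a (2 * h) i| ≤ (2:ℤ)^(C-1) := fun i =>
  (hap i).trans (pow_le_pow_right₀ (by norm_num) (by omega))

lemma ap_start (i : ℕ) : 16 * |a (2 * 16) i| ≤ (2:ℤ)^(85-1) := by
  have := a_bound (2 * 16) i
  norm_num at this ⊢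
  linarith

lemma small_good (g : ℕ) (h1 : 17 ≤ g) (h2 : g ≤ 399) : Good g := by
  have s0 := chunk_sound (by norm_num) (by norm_num) (by norm_num) (ap_start) ck0
  have s1 := chunk_sound (by norm_num) (by norm_num) (by norm_num) (ap_mono (C := 115) (by norm_num) s0.2) ck1
  have s2 := chunk_sound (by norm_num) (by norm_num) (by norm_num) (ap_mono (C := 134) (by norm_num) s1.2) ck2
  have s3 := chunk_sound (by norm_num) (by norm_num) (by norm_num) (ap_mono (C := 149) (by norm_num) s2.2) ck3
  have s4 := chunk_sound (by norm_num) (by norm_num) (by norm_num) (ap_mono (C := 160) (by norm_num) s3.2) ck4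
  have s5 := chunk_sound (by norm_num) (by norm_num) (by norm_num) (ap_mono (C := 170) (by norm_num) s4.2) ck5
  have s6 := chunk_sound (by norm_num) (by norm_num) (by norm_num) (ap_mono (C := 177) (by norm_num) s5.2) ck6
  have s7 := chunk_sound (by norm_num) (by norm_num) (by norm_num) (ap_mono (C := 185) (by norm_num) s6.2) ck7
  have s8 := chunk_sound (by norm_num) (by norm_num) (by norm_num) (ap_mono (C := 191) (by norm_num) s7.2) ck8
  have s9 := chunk_sound (by norm_num) (by norm_num) (by norm_num) (ap_mono (C := 197) (by norm_num) s8.2) ck9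
  have s10 := chunk_sound (by norm_num) (by norm_num) (by norm_num) (ap_mono (C := 202) (by norm_num) s9.2) ck10
  have s11 := chunk_sound (by norm_num) (by norm_num) (by norm_num) (ap_mono (C := 208) (by norm_num) s10.2) ck11
  have s12 := chunk_sound (by norm_num) (by norm_num) (by norm_num) (ap_mono (C := 212) (by norm_num) s11.2) ck12
  have s13 := chunk_sound (by norm_num) (by norm_num) (by norm_num) (ap_mono (C := 217) (by norm_num) s12.2) ck13
  have s14 := chunk_sound (by norm_num) (by norm_num) (by norm_num) (ap_mono (C := 221) (by norm_num) s13.2) ck14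
  have s15 := chunk_sound (by norm_num) (by norm_num) (by norm_num) (ap_mono (C := 225) (by norm_num) s14.2) ck15
  have s16 := chunk_sound (by norm_num) (by norm_num) (by norm_num) (ap_mono (C := 227) (by norm_num) s15.2) ck16
  rcases Nat.lt_or_ge 149 g with q0 | q0
  swap
  · exact s0.1 g (by omega) (by omega)
  rcases Nat.lt_or_ge 202 g with q1 | q1
  swap
  · exact s1.1 g (by omega) (by omega)
  rcases Nat.lt_or_ge 236 g with q2 | q2
  swap
  · exact s2.1 g (by omega) (by omega)
  rcases Nat.lt_or_ge 261 g with q3 | q3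
  swap
  · exact s3.1 g (by omega) (by omega)
  rcases Nat.lt_or_ge 281 g with q4 | q4
  swap
  · exact s4.1 g (by omega) (by omega)
  rcases Nat.lt_or_ge 298 g with q5 | q5
  swap
  · exact s5.1 g (by omega) (by omega)
  rcases Nat.lt_or_ge 312 g with q6 | q6
  swap
  · exact s6.1 g (by omega) (by omega)
  rcases Nat.lt_or_ge 325 g with q7 | q7
  swap
  · exact s7.1 g (by omega) (by omega)
  rcases Nat.lt_or_ge 336 g with q8 | q8
  swap
  · exact s8.1 g (by omega) (by omega)
  rcases Nat.lt_or_ge 346 g with q9 | q9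
  swap
  · exact s9.1 g (by omega) (by omega)
  rcases Nat.lt_or_ge 356 g with q10 | q10
  swap
  · exact s10.1 g (by omega) (by omega)
  rcases Nat.lt_or_ge 365 g with q11 | q11
  swap
  · exact s11.1 g (by omega) (by omega)
  rcases Nat.lt_or_ge 373 g with q12 | q12
  swap
  · exact s12.1 g (by omega) (by omega)
  rcases Nat.lt_or_ge 381 g with q13 | q13
  swap
  · exact s13.1 g (by omega) (by omega)
  rcases Nat.lt_or_ge 388 g with q14 | q14
  swap
  · exact s14.1 g (by omega) (by omega)
  rcases Nat.lt_or_ge 395 g with q15 | q15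
  swap
  · exact s15.1 g (by omega) (by omega)
  exact s16.1 g (by omega) (by omega)

lemma all_good (g : ℕ) (h1 : 17 ≤ g) : Good g := by
  rcases Nat.lt_or_ge 399 g with h | h
  · intro j
    exact big (by omega) j
  · exact small_good g h1 h

lemma M_eq {n c : ℕ} {s : ℤ} (hs : ∀ j, |a n j| ≤ s) (hc : |a n c| = s) (hcr : c ≤ n * (n+1) / 2) :
    (M n : ℤ) = s := by
  apply le_antisymm
  · have h0 : 0 ≤ s := (abs_nonneg _).trans (hs 0)
    have : M n ≤ s.toNat := by
      unfold M
      apply Finset.sup_le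
      intro i _
      have := hs i
      rw [Int.abs_eq_natAbs] at this
      omega
    omega
  · have : (a n c).natAbs ≤ M n := by
      unfold M
      exact Finset.le_sup (f := fun i => (a n i).natAbs) (by simp; omega)
    rw [← hc, Int.abs_eq_natAbs]
    exact_mod_cast this
end QP

/-- For even `n` with `34 ≤ n ≤ 75000`: if `n ≡ 0 (mod 4)` then
`a(n, n(n+1)/4) = M n`, and if `n ≡ 2 (mod 4)` then `a(n, ⌊n(n+1)/4⌋) = -M n`. -/
theorem stmt_8 (n : ℕ) (heven : Even n) (h1 : 34 ≤ n) (h2 : n ≤ 75000) :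
    (n % 4 = 0 → a n (n * (n + 1) / 4) = (M n : ℤ)) ∧
    (n % 4 = 2 → a n (n * (n + 1) / 4) = -(M n : ℤ)) := by
  obtain ⟨h, rfl⟩ := heven.two_dvd
  have hg := QP.all_good h (by omega)
  have hcr : 2 * h * (2 * h + 1) / 4 ≤ 2 * h * (2 * h + 1) / 2 := Nat.div_le_div_left (by norm_num) (by norm_num)
  have h0 := (abs_nonneg _).trans (hg 0)
  constructor
  · intro h4
    have he : Even h := by rw [Nat.even_iff]; omega
    have hg2 := hg
    unfold QP.Good at hg2
    rw [he.neg_one_pow, one_mul] at hg2 h0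
    exact (QP.M_eq hg2 (abs_of_nonneg h0) hcr).symm
  · intro h4
    have ho : Odd h := by rw [Nat.odd_iff]; omega
    have hg2 := hg
    unfold QP.Good at hg2
    rw [ho.neg_one_pow, neg_one_mul] at hg2 h0
    rw [QP.M_eq hg2 (abs_of_nonpos (by linarith)) hcr, neg_neg]
end

section
/- For n = 391, the least index i with |a(391,i)| = M_391 is L(391) = 391·392/4 - 124 = 38194. -/
open Polynomial

/-- Extraction of a digit of a base-`T` expansion. -/
theorem digit_sum (T : ℕ) : ∀ (j n : ℕ) (w : ℕ → ℕ), (∀ i, w i < T) → j < n →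
    (∑ i ∈ Finset.range n, w i * T ^ i) / T ^ j % T = w j := by
  intro j
  induction j with
  | zero =>
    intro n w hw hj
    obtain ⟨n, rfl⟩ : ∃ n', n = n' + 1 := ⟨n - 1, by omega⟩
    rw [Finset.sum_range_succ']
    have : ∑ i ∈ Finset.range n, w (i + 1) * T ^ (i + 1)
        = T * ∑ i ∈ Finset.range n, w (i + 1) * T ^ i := by
      rw [Finset.mul_sum]
      exact Finset.sum_congr rfl fun i _ => by ring
    rw [this]
    simp [Nat.mod_eq_of_lt (hw 0)]
  | succ j ih =>
    intro n w hw hj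
    obtain ⟨n, rfl⟩ : ∃ n', n = n' + 1 := ⟨n - 1, by omega⟩
    have hT : 0 < T := lt_of_le_of_lt (Nat.zero_le _) (hw 0)
    rw [Finset.sum_range_succ']
    have : ∑ i ∈ Finset.range n, w (i + 1) * T ^ (i + 1)
        = T * ∑ i ∈ Finset.range n, w (i + 1) * T ^ i := by
      rw [Finset.mul_sum]
      exact Finset.sum_congr rfl fun i _ => by ring
    rw [this, pow_succ', ← Nat.div_div_eq_div_mul, pow_zero, mul_one, Nat.mul_add_div hT,
      Nat.div_eq_of_lt (hw 0), add_zero]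
    exact ih n (fun i => w (i + 1)) (fun i => hw _) (by omega)

theorem bit_sum (c n j : ℕ) (w : ℕ → ℕ) (hw : ∀ i, w i < 2 ^ (c + 1)) (hj : j < n) :
    (∑ i ∈ Finset.range n, w i * (2 ^ (c + 1)) ^ i).testBit ((c + 1) * j + c)
      = decide (2 ^ c ≤ w j) := by
  have h := digit_sum (2 ^ (c + 1)) j n w hw hj
  set S := ∑ i ∈ Finset.range n, w i * (2 ^ (c + 1)) ^ i
  rw [Nat.testBit_eq_decide_div_mod_eq, pow_add, pow_mul, ← Nat.div_div_eq_div_mul]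
  have h2 : S / (2 ^ (c + 1)) ^ j / 2 ^ c % 2 = w j / 2 ^ c := by
    rw [← h, pow_succ 2 c, Nat.mod_mul_right_div_self]
  rw [h2]
  have hlt : w j / 2 ^ c < 2 := by
    rw [Nat.div_lt_iff_lt_mul (by positivity)]
    have := hw j
    rw [pow_succ] at this
    omega
  have hle : 1 ≤ w j / 2 ^ c ↔ 2 ^ c ≤ w j := by
    rw [Nat.le_div_iff_mul_le (by positivity), one_mul]
  congr 1
  rw [← hle]
  exact propext (by omega)

theorem core (c D J m V R Rl Rl' : ℕ) (b : ℕ → ℤ)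
    (hb : ∀ i, |b i| + m < 2 ^ c) (hm : 0 < m) (hJ : J < D)
    (hV : (V : ℤ) = ∑ i ∈ Finset.range D, b i * ((2 ^ (c + 1) : ℕ) : ℤ) ^ i)
    (hR : R = ∑ i ∈ Finset.range D, (2 ^ (c + 1)) ^ i)
    (hRl : Rl = ∑ i ∈ Finset.range J, (2 ^ (c + 1)) ^ i)
    (hRl' : Rl' = ∑ i ∈ Finset.range (J + 1), (2 ^ (c + 1)) ^ i)
    (h1 : (V + (2 ^ c + m) * R - Rl) &&& (2 ^ c * R) = 2 ^ c * R)
    (h2 : (V + (2 ^ c - m - 1) * R + Rl') &&& (2 ^ c * R) = 2 ^ c * (2 ^ (c + 1)) ^ J)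
    (h3 : (V + (2 ^ c - m - 1) * R) &&& (2 ^ c * R) = 0) :
    (∀ i, i < J → |b i| < m) ∧ b J = m ∧ (∀ i, i < D → |b i| ≤ m) := by
  have hH : 0 < 2 ^ c := by positivity
  have hmH : m < 2 ^ c := by
    have := hb 0
    have h0 := abs_nonneg (b 0)
    zify; omega
  have hTH : 2 ^ (c + 1) = 2 * 2 ^ c := by rw [pow_succ]; ring
  have bz : ∀ i, -(2 ^ c : ℤ) < b i + -m ∧ b i + m < 2 ^ c := by
    intro i
    have := hb i
    have h3 := neg_abs_le (b i)
    have h4 := le_abs_self (b i)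
    constructor <;> linarith
  have indic : ∀ K, K ≤ D → ∑ i ∈ Finset.range K, (2 ^ (c + 1)) ^ i
      = ∑ i ∈ Finset.range D, (if i < K then 1 else 0) * (2 ^ (c + 1)) ^ i := by
    intro K hK
    simp only [ite_mul, one_mul, zero_mul]
    rw [← Finset.sum_filter]
    refine Finset.sum_congr ?_ fun _ _ => rfl
    ext x; simp; omega
  rw [indic J hJ.le] at hRl
  have hmask : 2 ^ c * R = ∑ i ∈ Finset.range D, (fun _ : ℕ => 2 ^ c) i * (2 ^ (c + 1)) ^ i := by
    rw [hR, Finset.mul_sum]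
  have hpt : 2 ^ c * (2 ^ (c + 1)) ^ J
      = ∑ i ∈ Finset.range D, (fun i : ℕ => if i = J then 2 ^ c else 0) i * (2 ^ (c + 1)) ^ i := by
    simp [ite_mul, hJ]
  let w1 : ℕ → ℕ := fun i => (b i + 2 ^ c + m - (if i < J then 1 else 0)).toNat
  have w1z : ∀ i, (w1 i : ℤ) = b i + 2 ^ c + m - (if i < J then 1 else 0) := by
    intro i
    have := bz i
    apply Int.toNat_of_nonneg
    split_ifs <;> omega
  have w1lt : ∀ i, w1 i < 2 ^ (c + 1) := by
    intro i
    have h := w1z i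
    have := bz i
    rw [hTH]; zify
    split_ifs at h <;> omega
  have hW1 : V + (2 ^ c + m) * R - Rl = ∑ i ∈ Finset.range D, w1 i * (2 ^ (c + 1)) ^ i := by
    suffices V + (2 ^ c + m) * R = ∑ i ∈ Finset.range D, w1 i * (2 ^ (c + 1)) ^ i + Rl by omega
    zify
    rw [hV, hR, hRl]
    push_cast
    rw [Finset.mul_sum, ← Finset.sum_add_distrib, ← Finset.sum_add_distrib]
    refine Finset.sum_congr rfl fun i _ => ?_
    rw [w1z]; ring
  have up : ∀ K, K ≤ D → ∀ i, i < D →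
      ((V + (2 ^ c - m - 1) * R + ∑ i ∈ Finset.range K, (2 ^ (c + 1)) ^ i) &&&
        (2 ^ c * R)).testBit ((c + 1) * i + c)
        = decide ((m : ℤ) + 1 ≤ b i + (if i < K then 1 else 0)) := by
    intro K hK i hi
    let w2 : ℕ → ℕ := fun i => (b i + 2 ^ c - m - 1 + (if i < K then 1 else 0)).toNat
    have w2z : ∀ i, (w2 i : ℤ) = b i + 2 ^ c - m - 1 + (if i < K then 1 else 0) := by
      intro i
      have := bz i
      apply Int.toNat_of_nonneg
      split_ifs <;> omega
    have w2lt : ∀ i, w2 i < 2 ^ (c + 1) := by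
      intro i
      have h := w2z i
      have := bz i
      rw [hTH]; zify
      split_ifs at h <;> omega
    have hW2 : V + (2 ^ c - m - 1) * R + ∑ i ∈ Finset.range K, (2 ^ (c + 1)) ^ i
        = ∑ i ∈ Finset.range D, w2 i * (2 ^ (c + 1)) ^ i := by
      have hsub : ((2 ^ c - m - 1 : ℕ) : ℤ) = 2 ^ c - m - 1 := by
        rw [Nat.sub_sub, Nat.cast_sub (by omega)]; push_cast; ring
      rw [indic K hK, ← Nat.cast_inj (R := ℤ)]
      push_cast
      rw [hsub, hV, hR]
      push_cast
      rw [Finset.mul_sum, ← Finset.sum_add_distrib, ← Finset.sum_add_distrib]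
      refine Finset.sum_congr rfl fun i _ => ?_
      rw [w2z]; ring
    rw [hW2, hmask, Nat.testBit_land, bit_sum c D i w2 w2lt hi,
      bit_sum c D i (fun _ => 2 ^ c) (fun _ => by omega) hi]
    have e := w2z i
    simp only [le_refl, decide_true, Bool.and_true, decide_eq_decide]
    have e2 : 2 ^ c ≤ w2 i ↔ (2 : ℤ) ^ c ≤ (w2 i : ℤ) := by norm_cast
    rw [e2, e]
    constructor <;> intro h <;> linarith
  rw [hW1, hmask] at h1
  have k1 : ∀ i, i < D → 2 ^ c ≤ w1 i := by
    intro i hi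
    have := congrArg (fun x => x.testBit ((c + 1) * i + c)) h1
    simp only [Nat.testBit_land] at this
    rw [bit_sum c D i w1 w1lt hi,
      bit_sum c D i (fun _ => 2 ^ c) (fun _ => by omega) hi] at this
    simpa using this
  have low : ∀ i, i < D → (2 : ℤ) ^ c ≤ b i + 2 ^ c + m - (if i < J then 1 else 0) := by
    intro i hi
    rw [← w1z]
    exact_mod_cast k1 i hi
  have k3 : ∀ i, i < D → b i ≤ m := by
    intro i hi
    have h := up 0 (Nat.zero_le _) i hi
    rw [Finset.sum_range_zero, add_zero, h3, Nat.zero_testBit] at h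
    have h' := of_decide_eq_false h.symm
    simp at h'
    omega
  have k2 : ∀ i, i < J + 1 → ((m : ℤ) ≤ b i ↔ i = J) := by
    intro i hi
    have h := up (J + 1) hJ i (by omega)
    rw [← hRl', h2, hpt, bit_sum c D i (fun i => if i = J then 2 ^ c else 0)
        (fun i => by split_ifs <;> omega) (by omega)] at h
    rw [if_pos hi] at h
    by_cases hij : i = J
    · simpa [hij] using h
    · simpa [hij] using h
  refine ⟨fun i hi => ?_, le_antisymm (k3 J hJ) ((k2 J (by omega)).2 rfl), fun i hi => ?_⟩
  · have p := low i (by omega)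
    have q : ¬ (m : ℤ) ≤ b i := fun h => (by omega : i ≠ J) ((k2 i (by omega)).1 h)
    rw [if_pos hi] at p
    rw [abs_lt]; constructor <;> linarith
  · have p := low i (by omega)
    have q := k3 i hi
    rw [abs_le]
    split_ifs at p <;> constructor <;> linarith

/-- Balanced product tree of the numbers `T ^ (k + 1) - 1`, for `lo ≤ k < lo + 2 ^ d`, `k < n`. -/
def tree (n T : ℕ) : ℕ → ℕ → ℕ
  | 0, lo => if lo < n then T ^ (lo + 1) - 1 else 1
  | d + 1, lo => tree n T d lo * tree n T d (lo + 2 ^ d)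

theorem tree_eq (n T d : ℕ) : ∀ lo, tree n T d lo
    = ∏ k ∈ Finset.range (2 ^ d), (if lo + k < n then T ^ (lo + k + 1) - 1 else 1) := by
  induction d with
  | zero => intro lo; simp [tree]
  | succ d ih =>
    intro lo
    rw [tree, ih, ih, pow_succ, mul_two, Finset.prod_range_add]
    simp only [add_assoc]

theorem tree_eq' (n T d : ℕ) (h : n ≤ 2 ^ d) : tree n T d 0
    = ∏ k ∈ Finset.range n, (T ^ (k + 1) - 1) := by
  rw [tree_eq]
  simp only [zero_add]
  rw [← Finset.prod_filter]
  refine Finset.prod_congr ?_ fun _ _ => rfl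
  ext x; simp; omega

/-- The polynomial `∏ (X^k - 1)`. -/
noncomputable def Q (n : ℕ) : Polynomial ℤ := ∏ k ∈ Finset.range n, ((X : Polynomial ℤ) ^ (k + 1) - 1)

theorem Q_coeff_le (n : ℕ) : ∀ i, |(Q n).coeff i| ≤ 2 ^ n := by
  induction n with
  | zero =>
    intro i
    simp only [Q, Finset.range_zero, Finset.prod_empty, coeff_one]
    split_ifs <;> simp
  | succ n ih =>
    intro i
    have e : Q (n + 1) = Q n * X ^ (n + 1) - Q n := by
      rw [Q, Finset.prod_range_succ, ← Q]; ring
    rw [e, coeff_sub, coeff_mul_X_pow', pow_succ]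
    have h1 := ih i
    split_ifs
    · have h2 := ih (i - (n + 1))
      have := abs_sub (((Q n).coeff (i - (n + 1)))) ((Q n).coeff i)
      linarith
    · rw [zero_sub, abs_neg]
      have := abs_nonneg ((Q n).coeff i)
      linarith

theorem Q_natDegree (n : ℕ) : (Q n).natDegree ≤ n * (n + 1) / 2 := by
  refine (natDegree_prod_le _ _).trans ?_
  have h : ∀ k ∈ Finset.range n, ((X : Polynomial ℤ) ^ (k + 1) - 1).natDegree ≤ k + 1 := by
    intro k _
    compute_degree
  refine (Finset.sum_le_sum h).trans ?_
  have := Finset.sum_range_succ' (fun k => k) n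
  have h2 := Finset.sum_range_id_mul_two (n + 1)
  rw [Nat.add_sub_cancel, this] at h2
  rw [Nat.le_div_iff_mul_le (by norm_num)]
  simp only [add_zero] at h2
  rw [h2, mul_comm]

theorem a_eq (n i : ℕ) : |a n i| = |(Q n).coeff i| := by
  have : (∏ k ∈ Finset.Icc 1 n, (1 - (X : Polynomial ℤ) ^ k)) = C ((-1) ^ n) * Q n := by
    rw [← Finset.Ico_add_one_right_eq_Icc, Finset.prod_Ico_eq_prod_range, Q, Nat.add_sub_cancel]
    have e : ∀ k ∈ Finset.range n, (1 - (X : Polynomial ℤ) ^ (1 + k)) = (-1) * (X ^ (k + 1) - 1) := by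
      intro k _; ring
    rw [Finset.prod_congr rfl e, Finset.prod_mul_distrib]
    simp
  rw [a, this, coeff_C_mul, abs_mul, abs_pow]
  simp

theorem tree_eval (n T d : ℕ) (hT : 0 < T) (h : n ≤ 2 ^ d) :
    (tree n T d 0 : ℤ) = (Q n).eval (T : ℤ) := by
  rw [tree_eq' n T d h, Q, eval_prod]
  push_cast
  refine Finset.prod_congr rfl fun k _ => ?_
  rw [Nat.cast_sub (Nat.one_le_pow _ _ hT)]
  simp

/-- Repunit `1 + T + ⋯ + T ^ (x * y - 1)`. -/
def rep (T x y : ℕ) : ℕ := ((T ^ x) ^ y - 1) / (T - 1)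

theorem rep_eq (T x y : ℕ) (hT : 2 ≤ T) : rep T x y = ∑ i ∈ Finset.range (x * y), T ^ i := by
  rw [rep, ← pow_mul, Nat.geomSum_eq hT]

/-- The numerical verification. -/
def check (V R Rl H m P : ℕ) : Bool :=
  Nat.beq ((V + (H + m) * R - Rl) &&& (H * R)) (H * R) &&
  (Nat.beq ((V + (H - m - 1) * R + (Rl + P)) &&& (H * R)) (H * P) &&
  Nat.beq ((V + (H - m - 1) * R) &&& (H * R)) 0)

theorem check_true : check (tree 391 (2 ^ 394) 9 0) (rep (2 ^ 394) 277 277) (rep (2 ^ 394) 338 113)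
    (2 ^ 393) 37277661854305702471955349763188 (((2 ^ 394) ^ 338) ^ 113) = true := by
  decide +kernel

theorem pow_add_lt : (2 : ℤ) ^ 391 + ((37277661854305702471955349763188 : ℕ) : ℤ) < 2 ^ 393 := by
  have h : ((37277661854305702471955349763188 : ℕ) : ℤ) < 2 ^ 391 := by
    refine lt_of_lt_of_le (b := (2 : ℤ) ^ 120) (by norm_num) ?_
    exact pow_le_pow_right₀ (by norm_num) (by norm_num)
  have e : (2 : ℤ) ^ 393 = 2 ^ 391 * 4 := by
    rw [show 393 = 391 + 2 from rfl, pow_add]; norm_num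
  have p : (0 : ℤ) < 2 ^ 391 := by positivity
  rw [e]
  clear e
  generalize (2 : ℤ) ^ 391 = x at *
  generalize ((37277661854305702471955349763188 : ℕ) : ℤ) = y at *
  linarith

theorem core' (c D J m V R Rl T H n : ℕ) (hT : T = 2 ^ (c + 1)) (hH : H = 2 ^ c)
    (hb : (2 : ℤ) ^ n + m < 2 ^ c) (hm : 0 < m) (hJ : J < D) (hD : n * (n + 1) / 2 < D)
    (hV : (V : ℤ) = (Q n).eval (T : ℤ))
    (hR : R = ∑ i ∈ Finset.range D, T ^ i)
    (hRl : Rl = ∑ i ∈ Finset.range J, T ^ i)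
    (hc : check V R Rl H m (T ^ J) = true) :
    (∀ i, i < J → |(Q n).coeff i| < m) ∧ (Q n).coeff J = m ∧
      (∀ i, i < D → |(Q n).coeff i| ≤ m) := by
  subst hT hH
  rw [check, Bool.and_eq_true, Bool.and_eq_true, Nat.beq_eq, Nat.beq_eq, Nat.beq_eq] at hc
  obtain ⟨c1, c2, c3⟩ := hc
  refine core c D J m V R Rl _ (fun i => (Q n).coeff i) ?_ hm hJ ?_ hR hRl ?_ c1 c2 c3
  · intro i
    exact lt_of_le_of_lt (add_le_add_left (Q_coeff_le n i) _) hb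
  · rw [hV]
    exact eval_eq_sum_range' (lt_of_le_of_lt (Q_natDegree n) hD) _
  · rw [Finset.sum_range_succ, ← hRl]

theorem final : (∀ i, i < 38194 → |(Q 391).coeff i| < (37277661854305702471955349763188 : ℕ)) ∧
    (Q 391).coeff 38194 = (37277661854305702471955349763188 : ℕ) ∧
    (∀ i, i < 277 * 277 → |(Q 391).coeff i| ≤ (37277661854305702471955349763188 : ℕ)) := by
  have hc := check_true
  obtain ⟨H, hH⟩ : ∃ H, H = 2 ^ 393 := ⟨_, rfl⟩
  obtain ⟨T, hT'⟩ : ∃ T, T = 2 ^ 394 := ⟨_, rfl⟩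
  rw [← hH, ← hT'] at hc
  have hTe : T = 2 ^ (393 + 1) := hT'
  have hT : 2 ≤ T := by
    rw [hTe, pow_succ]
    have : 0 < 2 ^ 393 := by positivity
    rw [← hH] at this ⊢
    omega
  have h1 := tree_eval 391 T 9 (by omega) (by norm_num)
  have h2 := rep_eq T 277 277 hT
  have h3 := rep_eq T 338 113 hT
  have hP : (T ^ 338) ^ 113 = T ^ 38194 := by
    rw [← pow_mul]
  rw [hP] at hc
  rw [show 338 * 113 = 38194 by norm_num] at h3
  exact core' 393 (277 * 277) 38194 37277661854305702471955349763188 _ _ _ T H 391 hTe hH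
    pow_add_lt (by norm_num) (by norm_num) (by norm_num) h1 h2 h3 hc

/-- `L(391) = 391·392/4 - 124 = 38194`. -/
theorem stmt_15 : L 391 = 391 * 392 / 4 - 124 ∧ L 391 = 38194 := by
  suffices h : L 391 = 38194 by
    exact ⟨by rw [h], h⟩
  obtain ⟨f1, f2, f3⟩ := final
  have hJ : (a 391 38194).natAbs = 37277661854305702471955349763188 := by
    zify
    rw [a_eq, f2]; norm_num
  have hM : M 391 = 37277661854305702471955349763188 := by
    apply le_antisymm
    · refine Finset.sup_le fun i hi => ?_
      zify
      rw [a_eq]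
      exact_mod_cast f3 i (lt_of_lt_of_le (Finset.mem_range.1 hi) (by norm_num))
    · rw [← hJ]
      exact Finset.le_sup (f := fun i => (a 391 i).natAbs) (Finset.mem_range.2 (by norm_num))
  rw [L, hM]
  apply le_antisymm
  · exact Nat.sInf_le hJ
  · refine le_csInf ⟨_, hJ⟩ fun i hi => ?_
    by_contra hlt
    have h := f1 i (by omega)
    rw [← a_eq] at h
    have hi' : (a 391 i).natAbs = 37277661854305702471955349763188 := hi
    zify at hi'
    omega
end
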